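/- (Theorem 10) Suppose 0 < θ₀ < θ₁ < 1, 0 < r₀, q₀, q₁ ≤ ∞, a₀, a₁, b₀ ∈ SV, and ‖s^{-1/r₀} b₀(s)/a₀(s)‖_{r₀,(1,∞)} < ∞. (i) If σ is a strictly increasing differentiable function on (0,∞) with σ(t) ≈ t^{1-θ₀} a₀(t) and a^# = (b₀∘σ^{(-1)})/(a₀∘σ^{(-1)}) (σ^{(-1)} the inverse of σ), then (Ā_{θ₀,q₀;a₀}, A₁)_{0,r₀;a^#} ≅ Ā^𝓛_{θ₀,r₀,b₀,q₀,a₀}. (ii) If in addition ‖s^{-1/q₁} a₁(s)‖_{q₁,(0,1)} < ∞ and σ is strictly increasing differentiable with σ(t) ≈ t^{1-θ₀} a₀(t)/‖s^{-1/q₁} a₁(s)‖_{q₁,(0,t)} and a^# = (b₀∘σ^{(-1)})/(a₀∘σ^{(-1)}), then (Ā_{θ₀,q₀;a₀}, Ā_{1,q₁;a₁})_{0,r₀;a^#} ≅ Ā^𝓛_{θ₀,r₀,b₀,q₀,a₀}. (iii) If σ is strictly increasing differentiable with σ(t) ≈ t^{θ₁-θ₀} a₀(t)/a₁(t) and a^#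 = (b₀∘σ^{(-1)})/(a₀∘σ^{(-1)}), then (Ā_{θ₀,q₀;a₀}, Ā_{θ₁,q₁;a₁})_{0,r₀;a^#} ≅ Ā^𝓛_{θ₀,r₀,b₀,q₀,a₀}. -/

import Mathlib

open MeasureTheory Set ENNReal Filter

noncomputable section

/-- The `L_q` quasi-norm (with respect to Lebesgue measure) of an `ℝ≥0∞`-valued
function over a set of reals; for `q = ∞` it is the essential supremum. -/
def LqNorm (q : ℝ≥0∞) (s : Set ℝ) (g : ℝ → ℝ≥0∞) : ℝ≥0∞ :=
  if q = ∞ then essSup g (volume.restrict s)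
  else (∫⁻ t in s, g t ^ q.toReal) ^ q⁻¹.toReal

/-- The weight `s ↦ s ^ (-1/r) * b s`, as an `ℝ≥0∞`-valued function
(`1/∞ = 0` by convention). -/
def svWgt (r : ℝ≥0∞) (b : ℝ → ℝ) : ℝ → ℝ≥0∞ :=
  fun s => ENNReal.ofReal (s ^ (-(r⁻¹.toReal)) * b s)

/-- `f` and `g` are equivalent on `s`: each is bounded by a constant multiple
of the other there. -/
def EquivOn (s : Set ℝ) (f g : ℝ → ℝ) : Prop :=
  ∃ C : ℝ, 0 < C ∧ ∀ t ∈ s, C⁻¹ * g t ≤ f t ∧ f t ≤ C * g t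

/-- A positive measurable function `b` on `(0,∞)` is slowly varying if for every
`ε > 0`, `t ^ ε * b t` is equivalent to a non-decreasing function and
`t ^ (-ε) * b t` is equivalent to a non-increasing function. -/
def SlowlyVarying (b : ℝ → ℝ) : Prop :=
  AEMeasurable b (volume.restrict (Ioi 0)) ∧ (∀ t ∈ Ioi (0:ℝ), 0 < b t) ∧
    ∀ ε : ℝ, 0 < ε →
      (∃ g : ℝ → ℝ, MonotoneOn g (Ioi 0) ∧ EquivOn (Ioi 0) (fun t => t ^ ε * b t) g) ∧
      (∃ g : ℝ → ℝ, AntitoneOn g (Ioi 0) ∧ EquivOn (Ioi 0) (fun t => t ^ (-ε) * b t) g)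

/-- A quasi-Banach space continuously embedded into the ambient (Hausdorff) space `E`,
recorded via its extended-real-valued quasi-norm; the space itself is the set of
vectors of finite quasi-norm. -/
structure QuasiBanach (E : Type*) [AddCommGroup E] [Module ℝ E] where
  N : E → ℝ≥0∞
  zero : N 0 = 0
  definite : ∀ x, N x = 0 → x = 0
  smul : ∀ (c : ℝ) (x : E), N (c • x) = ENNReal.ofReal |c| * N x
  quasi : ∃ C : ℝ≥0∞, 1 ≤ C ∧ C ≠ ∞ ∧ ∀ x y, N (x + y) ≤ C * (N x + N y)
  complete : ∀ f : ℕ → E,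
    (∀ ε : ℝ≥0∞, 0 < ε → ∃ M : ℕ, ∀ m ≥ M, ∀ n ≥ M, N (f m - f n) < ε) →
    (∀ n, N (f n) ≠ ∞) →
    ∃ g : E, N g ≠ ∞ ∧ Tendsto (fun n => N (f n - g)) atTop (nhds 0)

variable {E : Type*} [AddCommGroup E] [Module ℝ E]

/-- The Peetre K-functional of the couple whose quasi-norms are `N₀`, `N₁`. -/
def Kf (N₀ N₁ : E → ℝ≥0∞) (t : ℝ) (f : E) : ℝ≥0∞ :=
  ⨅ g : E, N₀ g + ENNReal.ofReal t * N₁ (f - g)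

/-- The quasi-norm of the real interpolation space `Ā_{θ,q;b}`. -/
def normK (N₀ N₁ : E → ℝ≥0∞) (θ : ℝ) (q : ℝ≥0∞) (b : ℝ → ℝ) (f : E) : ℝ≥0∞ :=
  LqNorm q (Ioi 0) fun u =>
    ENNReal.ofReal (u ^ (-θ - q⁻¹.toReal) * b u) * Kf N₀ N₁ u f

/-- The quasi-norm of the limiting interpolation space `Ā^𝓛_{σ,r,b,q,a}`. -/
def normL (N₀ N₁ : E → ℝ≥0∞) (σ : ℝ) (r q : ℝ≥0∞) (b a : ℝ → ℝ) (f : E) : ℝ≥0∞ :=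
  LqNorm r (Ioi 0) fun t =>
    ENNReal.ofReal (t ^ (-(r⁻¹.toReal)) * (b t / a t)) *
      LqNorm q (Ioo 0 t) fun u =>
        ENNReal.ofReal (u ^ (-σ - q⁻¹.toReal) * a u) * Kf N₀ N₁ u f

/-- The quasi-norm of the limiting interpolation space `Ā^𝓡_{σ,r,b,q,a}`. -/
def normR (N₀ N₁ : E → ℝ≥0∞) (σ : ℝ) (r q : ℝ≥0∞) (b a : ℝ → ℝ) (f : E) : ℝ≥0∞ :=
  LqNorm r (Ioi 0) fun t =>
    ENNReal.ofReal (t ^ (-(r⁻¹.toReal)) * (b t / a t)) *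
      LqNorm q (Ioi t) fun u =>
        ENNReal.ofReal (u ^ (-σ - q⁻¹.toReal) * a u) * Kf N₀ N₁ u f

/-- Two (extended-real-valued) quasi-norms define the same space with
equivalent quasi-norms. -/
def EquivNorms (nX nY : E → ℝ≥0∞) : Prop :=
  ∃ C : ℝ≥0∞, 0 < C ∧ C ≠ ∞ ∧ ∀ f : E, C⁻¹ * nY f ≤ nX f ∧ nX f ≤ C * nY f

/-- The `ℓ_q` quasi-norm on sequences indexed by the integers. -/
def lq (q : ℝ≥0∞) (x : ℤ → ℝ≥0∞) : ℝ≥0∞ :=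
  if q = ∞ then ⨆ k, x k else (∑' k, x k ^ q.toReal) ^ q⁻¹.toReal

theorem lq_top (x : ℤ → ℝ≥0∞) : lq ∞ x = ⨆ k, x k := by simp [lq]

theorem lq_fin {q : ℝ≥0∞} (h : q ≠ ∞) (x : ℤ → ℝ≥0∞) :
    lq q x = (∑' k, x k ^ q.toReal) ^ (q.toReal)⁻¹ := by
  simp [lq, h, ENNReal.toReal_inv]

theorem lq_mono {q : ℝ≥0∞} {x y : ℤ → ℝ≥0∞} (h : ∀ k, x k ≤ y k) : lq q x ≤ lq q y := by
  by_cases hq : q = ∞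
  · subst hq; rw [lq_top, lq_top]; exact iSup_mono h
  · rw [lq_fin hq, lq_fin hq]
    refine ENNReal.rpow_le_rpow (ENNReal.tsum_le_tsum fun k => ?_) (by positivity)
    exact ENNReal.rpow_le_rpow (h k) (by positivity)

theorem lq_const {q : ℝ≥0∞} (hq0 : 0 < q) (c : ℝ≥0∞) (x : ℤ → ℝ≥0∞) :
    lq q (fun k => c * x k) = c * lq q x := by
  by_cases hq : q = ∞
  · subst hq; rw [lq_top, lq_top, ENNReal.mul_iSup]
  · have hp : 0 < q.toReal := ENNReal.toReal_pos hq0.ne' hq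
    rw [lq_fin hq, lq_fin hq]
    simp_rw [ENNReal.mul_rpow_of_nonneg _ _ hp.le]
    rw [ENNReal.tsum_mul_left, ENNReal.mul_rpow_of_nonneg _ _ (by positivity),
      ← ENNReal.rpow_mul, mul_inv_cancel₀ hp.ne', ENNReal.rpow_one]

theorem add_rpow_le_two {p : ℝ} (hp : 0 ≤ p) (a b : ℝ≥0∞) :
    (a + b) ^ p ≤ 2 ^ p * (a ^ p + b ^ p) := by
  rcases le_total a b with h | h
  · calc (a + b) ^ p ≤ (2 * b) ^ p := by
          refine ENNReal.rpow_le_rpow ?_ hp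
          rw [two_mul]; gcongr
      _ = 2 ^ p * b ^ p := ENNReal.mul_rpow_of_nonneg _ _ hp
      _ ≤ _ := by gcongr; exact le_add_self
  · calc (a + b) ^ p ≤ (2 * a) ^ p := by
          refine ENNReal.rpow_le_rpow ?_ hp
          rw [two_mul]; gcongr
      _ = 2 ^ p * a ^ p := ENNReal.mul_rpow_of_nonneg _ _ hp
      _ ≤ _ := by gcongr; exact le_self_add

theorem lq_add {q : ℝ≥0∞} (hq0 : 0 < q) : ∃ C : ℝ≥0∞, C ≠ ∞ ∧
    ∀ x y : ℤ → ℝ≥0∞, lq q (fun k => x k + y k) ≤ C * (lq q x + lq q y) := by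
  by_cases hq : q = ∞
  · subst hq
    refine ⟨1, by simp, fun x y => ?_⟩
    simp only [lq_top, one_mul]
    exact iSup_le fun k => add_le_add (le_iSup x k) (le_iSup y k)
  · have hp : 0 < q.toReal := ENNReal.toReal_pos hq0.ne' hq
    set p := q.toReal
    refine ⟨2 * 2 ^ p⁻¹, by finiteness, fun x y => ?_⟩
    rw [lq_fin hq, lq_fin hq, lq_fin hq]
    calc (∑' k, (x k + y k) ^ p) ^ p⁻¹
        ≤ (∑' k, 2 ^ p * (x k ^ p + y k ^ p)) ^ p⁻¹ := by
          refine ENNReal.rpow_le_rpow (ENNReal.tsum_le_tsum fun k => ?_) (by positivity)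
          exact add_rpow_le_two hp.le _ _
      _ = 2 * ((∑' k, x k ^ p) + (∑' k, y k ^ p)) ^ p⁻¹ := by
          rw [ENNReal.tsum_mul_left, ENNReal.tsum_add,
            ENNReal.mul_rpow_of_nonneg _ _ (by positivity),
            ← ENNReal.rpow_mul, mul_inv_cancel₀ hp.ne', ENNReal.rpow_one]
      _ ≤ 2 * (2 ^ p⁻¹ * ((∑' k, x k ^ p) ^ p⁻¹ + (∑' k, y k ^ p) ^ p⁻¹)) := by
          gcongr
          exact add_rpow_le_two (by positivity) _ _
      _ = _ := by rw [mul_assoc]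

theorem le_lq {q : ℝ≥0∞} (hq0 : 0 < q) (x : ℤ → ℝ≥0∞) (k : ℤ) : x k ≤ lq q x := by
  by_cases hq : q = ∞
  · subst hq; rw [lq_top]; exact le_iSup x k
  · have hp : 0 < q.toReal := ENNReal.toReal_pos hq0.ne' hq
    rw [lq_fin hq]
    calc x k = (x k ^ q.toReal) ^ (q.toReal)⁻¹ := by
          rw [← ENNReal.rpow_mul, mul_inv_cancel₀ hp.ne', ENNReal.rpow_one]
      _ ≤ _ := ENNReal.rpow_le_rpow (ENNReal.le_tsum k) (by positivity)

theorem lq_shift {q : ℝ≥0∞} (x : ℤ → ℝ≥0∞) (n : ℤ) : lq q (fun k => x (k + n)) = lq q x := by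
  by_cases hq : q = ∞
  · subst hq; rw [lq_top, lq_top]; exact (Equiv.addRight n).iSup_comp (g := x)
  · rw [lq_fin hq, lq_fin hq]
    congr 1
    exact (Equiv.addRight n).tsum_eq (fun k => x k ^ q.toReal)

/-- two-sided geometric sequence -/
def geo (γ : ℝ) (k : ℤ) : ℝ≥0∞ := ENNReal.ofReal (γ ^ k.natAbs)

theorem tsum_geo_ne_top {γ p : ℝ} (h0 : 0 < γ) (h1 : γ < 1) (hp : 0 < p) :
    ∑' k : ℤ, geo γ k ^ p ≠ ∞ := by
  have hg : ∀ k : ℤ, geo γ k ^ p = ENNReal.ofReal ((γ ^ p) ^ k.natAbs) := by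
    intro k
    rw [geo, ENNReal.ofReal_rpow_of_nonneg (by positivity) hp.le]
    congr 1
    rw [← Real.rpow_natCast, ← Real.rpow_natCast, ← Real.rpow_mul h0.le, ← Real.rpow_mul h0.le,
      mul_comm]
  simp_rw [hg]
  have h2 : γ ^ p < 1 := Real.rpow_lt_one h0.le h1 hp
  have h3 : 0 < γ ^ p := Real.rpow_pos_of_pos h0 _
  have hs : Summable (fun n : ℕ => (γ ^ p) ^ n) := summable_geometric_of_lt_one h3.le h2
  have : Summable (fun k : ℤ => (γ ^ p) ^ k.natAbs) := by
    refine Summable.of_nat_of_neg ?_ ?_ <;> simpa using hs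
  exact this.tsum_ofReal_ne_top

theorem lq_hardy {q : ℝ≥0∞} (hq0 : 0 < q) {γ : ℝ} (h0 : 0 < γ) (h1 : γ < 1) :
    ∃ C : ℝ≥0∞, C ≠ ∞ ∧
    ∀ x : ℤ → ℝ≥0∞, lq q (fun k => ⨆ j, geo γ (j - k) * x j) ≤ C * lq q x := by
  by_cases hq : q = ∞
  · subst hq
    refine ⟨1, by simp, fun x => ?_⟩
    simp only [lq_top, one_mul]
    refine iSup_le fun k => iSup_le fun j => le_trans ?_ (le_iSup x j)
    refine mul_le_of_le_one_left (by positivity) ?_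
    rw [geo, ← ENNReal.ofReal_one]
    exact ENNReal.ofReal_le_ofReal (pow_le_one₀ h0.le h1.le)
  · have hp : 0 < q.toReal := ENNReal.toReal_pos hq0.ne' hq
    set p := q.toReal with hpdef
    refine ⟨(∑' k : ℤ, geo γ k ^ p) ^ p⁻¹,
      ENNReal.rpow_ne_top_of_nonneg (by positivity) (tsum_geo_ne_top h0 h1 hp), fun x => ?_⟩
    rw [lq_fin hq, lq_fin hq, ← ENNReal.mul_rpow_of_nonneg _ _ (by positivity)]
    refine ENNReal.rpow_le_rpow ?_ (by positivity)
    rw [← hpdef]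
    calc ∑' k, (⨆ j, geo γ (j - k) * x j) ^ p
        ≤ ∑' k, ∑' j, geo γ (j - k) ^ p * x j ^ p := by
          refine ENNReal.tsum_le_tsum fun k => ?_
          have : ⨆ j, geo γ (j - k) * x j ≤ (∑' j, geo γ (j - k) ^ p * x j ^ p) ^ p⁻¹ := by
            refine iSup_le fun j => ?_
            rw [ENNReal.le_rpow_inv_iff hp, ENNReal.mul_rpow_of_nonneg _ _ hp.le]
            exact ENNReal.le_tsum (f := fun j => geo γ (j - k) ^ p * x j ^ p) j
          exact (ENNReal.le_rpow_inv_iff hp).1 this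
      _ = ∑' j, ∑' k, geo γ (j - k) ^ p * x j ^ p := ENNReal.tsum_comm
      _ = ∑' j, (∑' k, geo γ k ^ p) * x j ^ p := by
          refine tsum_congr fun j => ?_
          rw [ENNReal.tsum_mul_right]
          congr 1
          exact (Equiv.subLeft j).tsum_eq (fun k => geo γ k ^ p)
      _ = _ := by rw [ENNReal.tsum_mul_left]

theorem lq_geo {q : ℝ≥0∞} (hq0 : 0 < q) {γ : ℝ} (h0 : 0 < γ) (h1 : γ < 1) :
    lq q (geo γ) ≠ ∞ := by
  by_cases hq : q = ∞
  · subst hq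
    rw [lq_top]
    refine ne_top_of_le_ne_top ENNReal.one_ne_top (iSup_le fun k => ?_)
    rw [geo, ← ENNReal.ofReal_one]
    exact ENNReal.ofReal_le_ofReal (pow_le_one₀ h0.le h1.le)
  · have hp : 0 < q.toReal := ENNReal.toReal_pos hq0.ne' hq
    rw [lq_fin hq]
    exact ENNReal.rpow_ne_top_of_nonneg (by positivity) (tsum_geo_ne_top h0 h1 hp)

/-! ### Partitions -/

/-- partition points with ratios in `[2, M]` -/
structure GeoPart (M : ℝ) (p : ℤ → ℝ) : Prop where
  pos : ∀ k, 0 < p k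
  two : ∀ k, 2 * p k ≤ p (k + 1)
  upp : ∀ k, p (k + 1) ≤ M * p k

theorem GeoPart.strictMono {M : ℝ} {p : ℤ → ℝ} (h : GeoPart M p) : StrictMono p :=
  strictMono_int_of_lt_succ fun k => by linarith [h.pos k, h.two k]

theorem GeoPart.cover {M : ℝ} {p : ℤ → ℝ} (h : GeoPart M p) {u : ℝ} (hu : 0 < u) :
    ∃ k, u ∈ Ico (p k) (p (k + 1)) := by
  have hup : ∀ n : ℕ, 2 ^ n * p 0 ≤ p n := by
    intro n
    induction n with
    | zero => simp
    | succ n ih => have := h.two n; push_cast; rw [pow_succ]; linarith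
  have hdn : ∀ n : ℕ, 2 ^ n * p (-n) ≤ p 0 := by
    intro n
    induction n with
    | zero => simp
    | succ n ih =>
      have := h.two (-((n : ℤ) + 1))
      rw [show -((n : ℤ) + 1) + 1 = -n by ring] at this
      push_cast; rw [pow_succ]
      have h2 : (0 : ℝ) < 2 ^ n := by positivity
      nlinarith
  obtain ⟨n, hn⟩ := pow_unbounded_of_one_lt (u / p 0) (one_lt_two (α := ℝ))
  obtain ⟨m, hm⟩ := pow_unbounded_of_one_lt (p 0 / u) (one_lt_two (α := ℝ))
  rw [div_lt_iff₀ (h.pos 0)] at hn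
  rw [div_lt_iff₀ hu] at hm
  have h1 : u < p n := hn.trans_le (hup n)
  have h2 : p (-m) < u := by
    have := hdn m
    have h2 : (0 : ℝ) < 2 ^ m := by positivity
    nlinarith
  obtain ⟨k, hk, hk'⟩ := Int.exists_greatest_of_bdd (P := fun k => p k ≤ u)
    ⟨n, fun z hz => (h.strictMono.lt_iff_lt.1 (lt_of_le_of_lt hz h1)).le⟩ ⟨_, h2.le⟩
  refine ⟨k, hk, ?_⟩
  by_contra hc
  have := hk' (k + 1) (not_lt.1 hc)
  omega

theorem part_upper {q : ℝ≥0∞} (hq0 : 0 < q) {M : ℝ} :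
    ∃ C : ℝ≥0∞, C ≠ ∞ ∧ ∀ p, GeoPart M p → ∀ (S : Set ℝ), S ⊆ Ioi 0 → MeasurableSet S →
    ∀ (F : ℝ → ℝ≥0∞) (c : ℤ → ℝ≥0∞),
    (∀ k, ∀ u ∈ Ico (p k) (p (k + 1)), u ∈ S → F u ≤ ENNReal.ofReal (u ^ (-(q⁻¹.toReal))) * c k) →
    LqNorm q S F ≤ C * lq q c := by
  by_cases hq : q = ∞
  · subst hq
    refine ⟨1, by simp, fun p hp S hS hSm F c h => ?_⟩
    simp only [lq_top, one_mul, LqNorm, if_true]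
    refine essSup_le_of_ae_le _ ?_
    filter_upwards [ae_restrict_mem hSm] with u hu
    obtain ⟨k, hk⟩ := hp.cover (hS hu)
    refine (h k u hk hu).trans ?_
    simpa using le_iSup c k
  · have hr : 0 < q.toReal := ENNReal.toReal_pos hq0.ne' hq
    set r := q.toReal with hrdef
    refine ⟨(ENNReal.ofReal M) ^ r⁻¹, by finiteness, fun p hp S hS hSm F c h => ?_⟩
    simp only [LqNorm, if_neg hq]
    rw [lq_fin hq, ENNReal.toReal_inv, ← ENNReal.mul_rpow_of_nonneg _ _ (by positivity)]
    refine ENNReal.rpow_le_rpow ?_ (by positivity)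
    rw [← hrdef]
    have hcov : S ⊆ ⋃ k, S ∩ Ico (p k) (p (k + 1)) := by
      intro u hu
      obtain ⟨k, hk⟩ := hp.cover (hS hu)
      exact mem_iUnion.2 ⟨k, hu, hk⟩
    calc ∫⁻ t in S, F t ^ r ≤ ∫⁻ t in ⋃ k, S ∩ Ico (p k) (p (k + 1)), F t ^ r :=
          lintegral_mono_set hcov
      _ ≤ ∑' k, ∫⁻ t in S ∩ Ico (p k) (p (k + 1)), F t ^ r := lintegral_iUnion_le _ _
      _ ≤ ∑' k, ENNReal.ofReal M * c k ^ r := by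
          refine ENNReal.tsum_le_tsum fun k => ?_
          have hpk := hp.pos k
          calc ∫⁻ t in S ∩ Ico (p k) (p (k + 1)), F t ^ r
              ≤ ∫⁻ t in S ∩ Ico (p k) (p (k + 1)), ENNReal.ofReal ((p k)⁻¹) * c k ^ r := by
                refine setLIntegral_mono' (hSm.inter measurableSet_Ico) fun u hu => ?_
                have hu0 : 0 < u := hS hu.1
                calc F u ^ r ≤ (ENNReal.ofReal (u ^ (-(q⁻¹.toReal))) * c k) ^ r :=
                      ENNReal.rpow_le_rpow (h k u hu.2 hu.1) hr.le
                  _ = ENNReal.ofReal (u⁻¹) * c k ^ r := by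
                      rw [ENNReal.mul_rpow_of_nonneg _ _ hr.le,
                        ENNReal.ofReal_rpow_of_nonneg (by positivity) hr.le,
                        ← Real.rpow_mul hu0.le, ENNReal.toReal_inv, ← hrdef, neg_mul,
                        inv_mul_cancel₀ hr.ne', Real.rpow_neg_one]
                  _ ≤ _ := by
                      gcongr
                      exact hu.2.1
            _ = ENNReal.ofReal ((p k)⁻¹) * c k ^ r * volume (S ∩ Ico (p k) (p (k + 1))) := by
                rw [setLIntegral_const]
            _ ≤ ENNReal.ofReal ((p k)⁻¹) * c k ^ r * ENNReal.ofReal (p (k + 1) - p k) := by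
                gcongr
                rw [← Real.volume_Ico]
                exact measure_mono inter_subset_right
            _ = ENNReal.ofReal ((p k)⁻¹ * (p (k + 1) - p k)) * c k ^ r := by
                rw [ENNReal.ofReal_mul (by positivity)]; ring
            _ ≤ _ := by
                gcongr
                rw [inv_mul_le_iff₀ hpk]
                linarith [hp.upp k, mul_comm M (p k)]
      _ = _ := by rw [ENNReal.tsum_mul_left]

theorem part_lower {q : ℝ≥0∞} (hq0 : 0 < q) {M : ℝ} :
    ∃ C : ℝ≥0∞, C ≠ ∞ ∧ ∀ p, GeoPart M p → ∀ (S : Set ℝ), MeasurableSet S →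
    ∀ (F : ℝ → ℝ≥0∞) (c : ℤ → ℝ≥0∞),
    (∀ k, c k ≠ 0 → ∀ u ∈ Ico (p k) (p (k + 1)),
      u ∈ S ∧ ENNReal.ofReal (u ^ (-(q⁻¹.toReal))) * c k ≤ F u) →
    lq q c ≤ C * LqNorm q S F := by
  by_cases hq : q = ∞
  · subst hq
    refine ⟨1, by simp, fun p hp S hSm F c h => ?_⟩
    simp only [lq_top, one_mul, LqNorm, if_true]
    refine iSup_le fun k => ?_
    by_cases hc : c k = 0
    · simp [hc]
    by_contra hlt
    rw [not_le] at hlt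
    have h1 : ∀ᵐ u ∂(volume.restrict S), F u < c k := ae_lt_of_essSup_lt hlt
    rw [ae_restrict_iff' hSm] at h1
    have h2 : volume (Ico (p k) (p (k + 1))) = 0 := by
      refine measure_mono_null ?_ (ae_iff.1 h1)
      intro u hu
      have := h k hc u hu
      simp only [inv_top, toReal_zero, neg_zero, Real.rpow_zero, ofReal_one, one_mul] at this
      simp only [mem_setOf_eq, not_forall]
      exact ⟨this.1, not_lt.2 this.2⟩
    rw [Real.volume_Ico, ENNReal.ofReal_eq_zero] at h2
    linarith [h2, hp.two k, hp.pos k]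
  · have hr : 0 < q.toReal := ENNReal.toReal_pos hq0.ne' hq
    set r := q.toReal with hrdef
    refine ⟨2 ^ r⁻¹, by finiteness, fun p hp S hSm F c h => ?_⟩
    simp only [LqNorm, if_neg hq]
    rw [lq_fin hq, ENNReal.toReal_inv, ← ENNReal.mul_rpow_of_nonneg _ _ (by positivity)]
    refine ENNReal.rpow_le_rpow ?_ (by positivity)
    rw [← hrdef]
    let I : ℤ → Set ℝ := fun k => if c k = 0 then ∅ else Ico (p k) (p (k + 1))
    have hIs : ∀ k, I k ⊆ Ico (p k) (p (k + 1)) := by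
      intro k; by_cases hc : c k = 0 <;> simp [I, hc]
    have hIm : ∀ k, MeasurableSet (I k) := by
      intro k; by_cases hc : c k = 0 <;> simp [I, hc]
    have hdis : Pairwise (Function.onFun Disjoint I) := by
      intro i j hij
      have := hp.strictMono.monotone.pairwise_disjoint_on_Ico_succ hij
      exact this.mono (hIs i) (hIs j)
    have hsub : ⋃ k, I k ⊆ S := by
      refine iUnion_subset fun k u hu => ?_
      by_cases hc : c k = 0
      · simp [I, hc] at hu
      · exact (h k hc u (hIs k hu)).1
    calc ∑' k, c k ^ r ≤ ∑' k, 2 * ∫⁻ t in I k, F t ^ r := by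
          refine ENNReal.tsum_le_tsum fun k => ?_
          by_cases hc : c k = 0
          · simp [hc, hr]
          have hpk := hp.pos k
          have hpk1 := hp.pos (k + 1)
          have hI : I k = Ico (p k) (p (k + 1)) := by simp [I, hc]
          rw [hI]
          calc c k ^ r = 2 * (ENNReal.ofReal (2⁻¹) * c k ^ r) := by
                rw [← mul_assoc, ENNReal.ofReal_inv_of_pos (by norm_num)]
                simp [ENNReal.mul_inv_cancel]
            _ ≤ 2 * (ENNReal.ofReal ((p (k + 1))⁻¹ * (p (k + 1) - p k)) * c k ^ r) := by
                gcongr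
                rw [le_inv_mul_iff₀ hpk1]
                linarith [hp.two k]
            _ = 2 * (ENNReal.ofReal ((p (k + 1))⁻¹) * c k ^ r * volume (Ico (p k) (p (k + 1)))) := by
                rw [ENNReal.ofReal_mul (by positivity), Real.volume_Ico]; ring
            _ = 2 * ∫⁻ t in Ico (p k) (p (k + 1)), ENNReal.ofReal ((p (k + 1))⁻¹) * c k ^ r := by
                rw [setLIntegral_const]
            _ ≤ _ := by
                gcongr 2 * ?_
                refine setLIntegral_mono' measurableSet_Ico fun u hu => ?_
                have hu0 : 0 < u := hpk.trans_le hu.1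
                calc _ ≤ ENNReal.ofReal (u⁻¹) * c k ^ r := by
                      gcongr
                      exact hu.2.le
                  _ = (ENNReal.ofReal (u ^ (-(q⁻¹.toReal))) * c k) ^ r := by
                      rw [ENNReal.mul_rpow_of_nonneg _ _ hr.le,
                        ENNReal.ofReal_rpow_of_nonneg (by positivity) hr.le,
                        ← Real.rpow_mul hu0.le, ENNReal.toReal_inv, ← hrdef, neg_mul,
                        inv_mul_cancel₀ hr.ne', Real.rpow_neg_one]
                  _ ≤ F u ^ r := ENNReal.rpow_le_rpow (h k hc u hu).2 hr.le
      _ = 2 * ∑' k, ∫⁻ t in I k, F t ^ r := ENNReal.tsum_mul_left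
      _ = 2 * ∫⁻ t in ⋃ k, I k, F t ^ r := by rw [lintegral_iUnion hIm hdis]
      _ ≤ _ := by gcongr

/-! ### Slowly and regularly varying functions -/

/-- quantitative slow variation -/
def SVr (a : ℝ → ℝ) : Prop :=
  (∀ t, 0 < t → 0 < a t) ∧ ∀ ε : ℝ, 0 < ε → ∃ C : ℝ, 0 < C ∧ ∀ s t, 0 < s → s ≤ t →
    a t ≤ C * (s / t) ^ (-ε) * a s ∧ a s ≤ C * (s / t) ^ (-ε) * a t

def UpR (φ : ℝ → ℝ) (δ : ℝ) : Prop :=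
  ∃ C : ℝ, 0 < C ∧ ∀ s t, 0 < s → s ≤ t → φ s ≤ C * (s / t) ^ δ * φ t

def DnR (φ : ℝ → ℝ) (δ : ℝ) : Prop :=
  ∃ C : ℝ, 0 < C ∧ ∀ s t, 0 < s → s ≤ t → φ t ≤ C * (s / t) ^ δ * φ s

theorem SVr.upR {a : ℝ → ℝ} (h : SVr a) {β δ : ℝ} (hd : δ < β) : UpR (fun t => t ^ β * a t) δ := by
  obtain ⟨C, hC, H⟩ := h.2 (β - δ) (by linarith)
  refine ⟨C, hC, fun s t hs hst => ?_⟩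
  have ht : 0 < t := hs.trans_le hst
  have h1 := (H s t hs hst).2
  have h2 : (s / t) ^ δ = (s / t) ^ β * (s / t) ^ (-(β - δ)) := by
    rw [← Real.rpow_add (by positivity)]; congr 1; ring
  have h3 : (s / t) ^ β * t ^ β = s ^ β := by
    rw [Real.div_rpow hs.le ht.le]; field_simp
  calc s ^ β * a s ≤ s ^ β * (C * (s / t) ^ (-(β - δ)) * a t) := by gcongr
    _ = C * (s / t) ^ δ * (t ^ β * a t) := by rw [h2, ← h3]; ring

theorem SVr.dnR {a : ℝ → ℝ} (h : SVr a) {β δ : ℝ} (hd : δ < -β) :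
    DnR (fun t => t ^ β * a t) δ := by
  obtain ⟨C, hC, H⟩ := h.2 (-β - δ) (by linarith)
  refine ⟨C, hC, fun s t hs hst => ?_⟩
  have ht : 0 < t := hs.trans_le hst
  have h1 := (H s t hs hst).1
  have h2 : (s / t) ^ δ = (s / t) ^ (-β) * (s / t) ^ (-(-β - δ)) := by
    rw [← Real.rpow_add (by positivity)]; congr 1; ring
  have h3 : (s / t) ^ (-β) * s ^ β = t ^ β := by
    rw [Real.rpow_neg (by positivity), Real.div_rpow hs.le ht.le]
    have := Real.rpow_pos_of_pos hs β
    field_simp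
  calc t ^ β * a t ≤ t ^ β * (C * (s / t) ^ (-(-β - δ)) * a s) := by gcongr
    _ = C * (s / t) ^ δ * (s ^ β * a s) := by rw [h2, ← h3]; ring

theorem SlowlyVarying.svr {a : ℝ → ℝ} (h : SlowlyVarying a) : SVr a := by
  refine ⟨h.2.1, fun ε hε => ?_⟩
  obtain ⟨⟨g, hg, C, hC, H⟩, ⟨g', hg', C', hC', H'⟩⟩ := h.2.2 ε hε
  refine ⟨C * C + C' * C', by positivity, fun s t hs hst => ?_⟩
  have ht : 0 < t := hs.trans_le hst
  have e1 : (s / t) ^ (-ε) = t ^ ε * (s ^ ε)⁻¹ := by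
    rw [Real.rpow_neg (by positivity), Real.div_rpow hs.le ht.le, inv_div, div_eq_mul_inv]
  have hsp := Real.rpow_pos_of_pos hs ε
  have htp := Real.rpow_pos_of_pos ht ε
  have has := h.2.1 s hs
  have hat := h.2.1 t ht
  have k1 : s ^ ε * a s ≤ C * C * (t ^ ε * a t) := by
    have h1 := (H s hs).2
    have h2 := hg hs ht hst
    have h3 := (H t ht).1
    rw [inv_mul_le_iff₀ hC] at h3
    calc s ^ ε * a s ≤ C * g s := h1
      _ ≤ C * g t := by gcongr
      _ ≤ C * (C * (t ^ ε * a t)) := by gcongr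
      _ = _ := by ring
  have k2 : t ^ (-ε) * a t ≤ C' * C' * (s ^ (-ε) * a s) := by
    have h1 := (H' t ht).2
    have h2 := hg' hs ht hst
    have h3 := (H' s hs).1
    rw [inv_mul_le_iff₀ hC'] at h3
    calc t ^ (-ε) * a t ≤ C' * g' t := h1
      _ ≤ C' * g' s := by gcongr
      _ ≤ C' * (C' * (s ^ (-ε) * a s)) := by gcongr
      _ = _ := by ring
  rw [Real.rpow_neg ht.le, Real.rpow_neg hs.le] at k2
  rw [e1]
  constructor
  · calc a t = t ^ ε * ((t ^ ε)⁻¹ * a t) := by field_simp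
      _ ≤ t ^ ε * (C' * C' * ((s ^ ε)⁻¹ * a s)) := by gcongr
      _ = (C' * C') * (t ^ ε * (s ^ ε)⁻¹) * a s := by ring
      _ ≤ _ := by gcongr; nlinarith
  · calc a s = (s ^ ε)⁻¹ * (s ^ ε * a s) := by field_simp
      _ ≤ (s ^ ε)⁻¹ * (C * C * (t ^ ε * a t)) := by gcongr
      _ = (C * C) * (t ^ ε * (s ^ ε)⁻¹) * a t := by ring
      _ ≤ _ := by gcongr; nlinarith

theorem SVr.div {a b : ℝ → ℝ} (ha : SVr a) (hb : SVr b) : SVr (fun t => a t / b t) := by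
  refine ⟨fun t ht => div_pos (ha.1 t ht) (hb.1 t ht), fun ε hε => ?_⟩
  obtain ⟨C, hC, H⟩ := ha.2 (ε / 2) (by linarith)
  obtain ⟨D, hD, H'⟩ := hb.2 (ε / 2) (by linarith)
  refine ⟨C * D, by positivity, fun s t hs hst => ?_⟩
  have ht : 0 < t := hs.trans_le hst
  have e : (s / t) ^ (-ε) = (s / t) ^ (-(ε / 2)) * (s / t) ^ (-(ε / 2)) := by
    rw [← Real.rpow_add (by positivity)]; congr 1; ring
  have hx : 0 < (s / t) ^ (-(ε / 2)) := Real.rpow_pos_of_pos (by positivity) _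
  rw [e]
  set x := (s / t) ^ (-(ε / 2))
  have p1 := ha.1 s hs
  have p2 := ha.1 t ht
  have p3 := hb.1 s hs
  have p4 := hb.1 t ht
  obtain ⟨h1, h2⟩ := H s t hs hst
  obtain ⟨h3, h4⟩ := H' s t hs hst
  constructor
  · rw [← mul_div_assoc, div_le_div_iff₀ p4 p3]
    calc a t * b s ≤ (C * x * a s) * (D * x * b t) := by gcongr
      _ = _ := by ring
  · rw [← mul_div_assoc, div_le_div_iff₀ p3 p4]
    calc a s * b t ≤ (C * x * a t) * (D * x * b s) := by gcongr
      _ = _ := by ring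

theorem SVr.one : SVr (fun _ => 1) := by
  refine ⟨fun _ _ => one_pos, fun ε hε => ⟨1, one_pos, fun s t hs hst => ?_⟩⟩
  have ht : 0 < t := hs.trans_le hst
  have : 1 ≤ (s / t) ^ (-ε) := by
    refine Real.one_le_rpow_of_pos_of_le_one_of_nonpos (by positivity) ?_ (by linarith)
    rwa [div_le_one ht]
  simpa using this

/-! ### Discretization -/

def wt (θ : ℝ) (a : ℝ → ℝ) (u : ℝ) : ℝ := u ^ (-θ) * a u

def Fw (q : ℝ≥0∞) (θ : ℝ) (a : ℝ → ℝ) (H : ℝ → ℝ≥0∞) (u : ℝ) : ℝ≥0∞ :=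
  ENNReal.ofReal (u ^ (-θ - q⁻¹.toReal) * a u) * H u

theorem Fw_eq {q : ℝ≥0∞} {θ : ℝ} {a : ℝ → ℝ} {H : ℝ → ℝ≥0∞} {u : ℝ} (hu : 0 < u) :
    Fw q θ a H u = ENNReal.ofReal (u ^ (-(q⁻¹.toReal))) * (ENNReal.ofReal (wt θ a u) * H u) := by
  rw [Fw, wt, ← mul_assoc, ← ENNReal.ofReal_mul (by positivity), ← mul_assoc,
    ← Real.rpow_add hu]
  congr 4; ring

theorem SVr.wt_pos {a : ℝ → ℝ} (ha : SVr a) (θ : ℝ) {u : ℝ} (hu : 0 < u) : 0 < wt θ a u :=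
  mul_pos (Real.rpow_pos_of_pos hu _) (ha.1 u hu)

/-- local comparability: constants on bounded ratio intervals -/
theorem SVr.wt_comp {a : ℝ → ℝ} (ha : SVr a) (θ : ℝ) (M : ℝ) (hM : 1 ≤ M) : ∃ C : ℝ, 0 < C ∧
    ∀ s t, 0 < s → s ≤ t → t ≤ M * s → wt θ a t ≤ C * wt θ a s ∧ wt θ a s ≤ C * wt θ a t := by
  obtain ⟨C, hC, H⟩ := ha.upR (β := -θ) (δ := -θ - 1) (by linarith)
  obtain ⟨D, hD, H'⟩ := ha.dnR (β := -θ) (δ := θ - 1) (by linarith)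
  have key : ∀ δ : ℝ, ∀ x : ℝ, M⁻¹ ≤ x → x ≤ 1 → x ^ δ ≤ M ^ |δ| := by
    intro δ x hx hx1
    have hM0 : 0 < M := by linarith
    have hx0 : 0 < x := lt_of_lt_of_le (by positivity) hx
    calc x ^ δ ≤ x ^ (-|δ|) :=
          Real.rpow_le_rpow_of_exponent_ge hx0 hx1 (neg_abs_le δ)
      _ ≤ (M⁻¹) ^ (-|δ|) :=
          Real.rpow_le_rpow_of_nonpos (by positivity) hx (by simp)
      _ = M ^ |δ| := by
          rw [Real.rpow_neg (by positivity), Real.inv_rpow hM0.le, inv_inv]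
  have hM0 : 0 < M := by linarith
  refine ⟨C * M ^ |-θ - 1| + D * M ^ |θ - 1|, by positivity, fun s t hs hst htM => ?_⟩
  have ht : 0 < t := hs.trans_le hst
  have x1 : s / t ≤ 1 := by rwa [div_le_one ht]
  have x0 : M⁻¹ ≤ s / t := by
    rw [le_div_iff₀ ht, inv_mul_le_iff₀ hM0]; exact htM
  have ps := ha.wt_pos θ hs
  have pt := ha.wt_pos θ ht
  constructor
  · calc wt θ a t ≤ D * (s / t) ^ (θ - 1) * wt θ a s := H' s t hs hst
      _ ≤ D * M ^ |θ - 1| * wt θ a s := by gcongr; exact key _ _ x0 x1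
      _ ≤ _ := by
        gcongr
        have : 0 < C * M ^ |-θ - 1| := by positivity
        linarith
  · calc wt θ a s ≤ C * (s / t) ^ (-θ - 1) * wt θ a t := H s t hs hst
      _ ≤ C * M ^ |-θ - 1| * wt θ a t := by gcongr; exact key _ _ x0 x1
      _ ≤ _ := by
        gcongr
        have : 0 < D * M ^ |θ - 1| := by positivity
        linarith

theorem geoPart_pow {t lam : ℝ} (ht : 0 < t) (hl : 2 ≤ lam) :
    GeoPart lam (fun j : ℤ => t * lam ^ j) := by
  have h0 : 0 < lam := by linarith
  refine ⟨fun k => by positivity, fun k => ?_, fun k => ?_⟩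
  · have : 0 < t * lam ^ k := by positivity
    rw [zpow_add_one₀ h0.ne']; nlinarith
  · rw [zpow_add_one₀ h0.ne']; apply le_of_eq; ring

def HD (H : ℝ → ℝ≥0∞) : Prop :=
  ∀ u v, 0 < u → u ≤ v → v ≤ 2 * u → H v ≤ 2 * H u ∧ H u ≤ 2 * H v

/-- the discretized sequence based at `t` -/
def ds (θ : ℝ) (a : ℝ → ℝ) (H : ℝ → ℝ≥0∞) (t : ℝ) (j : ℤ) : ℝ≥0∞ :=
  ENNReal.ofReal (wt θ a (t * 2 ^ j)) * H (t * 2 ^ j)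

/-- restriction of a sequence to negative indices -/
def neg1 (x : ℤ → ℝ≥0∞) (j : ℤ) : ℝ≥0∞ := if j < 0 then x j else 0

theorem disc {q : ℝ≥0∞} (hq0 : 0 < q) {a : ℝ → ℝ} (ha : SVr a) (θ : ℝ) :
    ∃ C : ℝ≥0∞, C ≠ ∞ ∧ ∀ t, 0 < t → ∀ H, HD H →
      (LqNorm q (Ioi 0) (Fw q θ a H) ≤ C * lq q (ds θ a H t) ∧
       LqNorm q (Ioo 0 t) (Fw q θ a H) ≤ C * lq q (neg1 (ds θ a H t))) ∧
      (lq q (ds θ a H t) ≤ C * LqNorm q (Ioi 0) (Fw q θ a H) ∧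
       lq q (neg1 (ds θ a H t)) ≤ C * LqNorm q (Ioo 0 t) (Fw q θ a H)) := by
  obtain ⟨C₁, hC₁, U⟩ := part_upper hq0 (M := 2)
  obtain ⟨C₂, hC₂, L⟩ := part_lower hq0 (M := 2)
  obtain ⟨W, hW, hw⟩ := ha.wt_comp θ 2 (by norm_num)
  have hWne : ENNReal.ofReal W ≠ 0 := by simpa using hW
  refine ⟨C₁ * (ENNReal.ofReal W * 2) + C₂ * (ENNReal.ofReal W * 2), by finiteness,
    fun t ht H hH => ?_⟩
  have P := geoPart_pow ht (le_refl (2 : ℝ))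
  have up : ∀ k : ℤ, ∀ u ∈ Ico (t * 2 ^ k) (t * 2 ^ (k + 1)), 0 < u → Fw q θ a H u ≤
      ENNReal.ofReal (u ^ (-(q⁻¹.toReal))) * ((ENNReal.ofReal W * 2) * ds θ a H t k) := by
    intro k u hu hu0
    have h2 : u ≤ 2 * (t * 2 ^ k) := by
      have := hu.2.le; rw [zpow_add_one₀ two_ne_zero] at this; linarith
    rw [Fw_eq hu0]
    gcongr ENNReal.ofReal _ * ?_
    calc ENNReal.ofReal (wt θ a u) * H u
        ≤ (ENNReal.ofReal (W * wt θ a (t * 2 ^ k))) * (2 * H (t * 2 ^ k)) := by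
          gcongr
          · exact (hw _ _ (P.pos k) hu.1 h2).1
          · exact (hH _ _ (P.pos k) hu.1 h2).1
      _ = _ := by rw [ENNReal.ofReal_mul hW.le, ds]; ring
  have lo : ∀ k : ℤ, ∀ u ∈ Ico (t * 2 ^ k) (t * 2 ^ (k + 1)), 0 < u →
      ENNReal.ofReal (u ^ (-(q⁻¹.toReal))) * ds θ a H t k ≤ (ENNReal.ofReal W * 2) * Fw q θ a H u := by
    intro k u hu hu0
    have h2 : u ≤ 2 * (t * 2 ^ k) := by
      have := hu.2.le; rw [zpow_add_one₀ two_ne_zero] at this; linarith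
    rw [Fw_eq hu0, mul_left_comm]
    gcongr ENNReal.ofReal _ * ?_
    calc ds θ a H t k
        ≤ (ENNReal.ofReal (W * wt θ a u)) * (2 * H u) := by
          rw [ds]
          gcongr
          · exact (hw _ _ (P.pos k) hu.1 h2).2
          · exact (hH _ _ (P.pos k) hu.1 h2).2
      _ = _ := by rw [ENNReal.ofReal_mul hW.le]; ring
  have kpos : ∀ k : ℤ, ∀ u ∈ Ico (t * 2 ^ k) (t * 2 ^ (k + 1)), 0 < u :=
    fun k u hu => (P.pos k).trans_le hu.1
  have kneg : ∀ k : ℤ, ∀ u ∈ Ico (t * 2 ^ k) (t * 2 ^ (k + 1)), u < t → k < 0 := by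
    intro k u hu hut
    have : t * (2 : ℝ) ^ k < t * 2 ^ (0 : ℤ) := by simpa using hu.1.trans_lt hut
    exact P.strictMono.lt_iff_lt.1 this
  have kneg' : ∀ k : ℤ, ∀ u ∈ Ico (t * 2 ^ k) (t * 2 ^ (k + 1)), k < 0 → u < t := by
    intro k u hu hk
    have : t * (2 : ℝ) ^ (k + 1) ≤ t * 2 ^ (0 : ℤ) := P.strictMono.monotone (by omega)
    simp only [zpow_zero, mul_one] at this
    exact hu.2.trans_le this
  have h1 : C₁ * (ENNReal.ofReal W * 2) ≤ C₁ * (ENNReal.ofReal W * 2) + C₂ * (ENNReal.ofReal W * 2) :=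
    le_self_add
  have h2 : C₂ * (ENNReal.ofReal W * 2) ≤ C₁ * (ENNReal.ofReal W * 2) + C₂ * (ENNReal.ofReal W * 2) :=
    le_add_self
  have hV : ENNReal.ofReal W * 2 ≠ 0 := by simpa using hW
  have hV' : ENNReal.ofReal W * 2 ≠ ∞ := by finiteness
  generalize ENNReal.ofReal W * 2 = V at *
  have lo' : ∀ k : ℤ, ∀ u ∈ Ico (t * 2 ^ k) (t * 2 ^ (k + 1)), 0 < u →
      ENNReal.ofReal (u ^ (-(q⁻¹.toReal))) * (V⁻¹ * ds θ a H t k) ≤ Fw q θ a H u := by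
    intro k u hu hu0
    rw [mul_left_comm, mul_comm, ← div_eq_mul_inv]
    exact ENNReal.div_le_of_le_mul' (lo k u hu hu0)
  have conv : ∀ x : ℤ → ℝ≥0∞, ∀ R, lq q (fun k => V⁻¹ * x k) ≤ C₂ * R → lq q x ≤ C₂ * V * R := by
    intro x R h
    rw [lq_const hq0, mul_comm, ← div_eq_mul_inv, ENNReal.div_le_iff hV hV'] at h
    calc _ ≤ _ := h
      _ = _ := by ring
  refine ⟨⟨?_, ?_⟩, ?_, ?_⟩
  · have := U _ P (Ioi 0) subset_rfl measurableSet_Ioi (Fw q θ a H) (fun k => V * ds θ a H t k)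
      (fun k u hu hu0 => up k u hu hu0)
    rw [lq_const hq0, ← mul_assoc] at this
    exact this.trans (by gcongr)
  · have := U _ P (Ioo 0 t) (fun u hu => hu.1) measurableSet_Ioo (Fw q θ a H)
      (fun k => V * neg1 (ds θ a H t) k)
      (fun k u hu hu0 => by
        rw [neg1, if_pos (kneg k u hu hu0.2)]; exact up k u hu hu0.1)
    rw [lq_const hq0, ← mul_assoc] at this
    exact this.trans (by gcongr)
  · refine (conv _ _ (L _ P (Ioi 0) measurableSet_Ioi (Fw q θ a H) _
      (fun k _ u hu => ⟨kpos k u hu, lo' k u hu (kpos k u hu)⟩))).trans (by gcongr)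
  · refine (conv _ _ (L _ P (Ioo 0 t) measurableSet_Ioo (Fw q θ a H) _ ?_)).trans (by gcongr)
    intro k hk u hu
    by_cases hk0 : k < 0
    · rw [neg1, if_pos hk0]
      exact ⟨⟨kpos k u hu, kneg' k u hu hk0⟩, lo' k u hu (kpos k u hu)⟩
    · simp [neg1, hk0] at hk

/-! ### The K-functional -/

theorem Kf_mono (N₀ N₁ : E → ℝ≥0∞) (f : E) {s t : ℝ} (h : s ≤ t) : Kf N₀ N₁ s f ≤ Kf N₀ N₁ t f := by
  unfold Kf
  gcongr

theorem Kf_le (N₀ N₁ : E → ℝ≥0∞) (t : ℝ) (f g : E) :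
    Kf N₀ N₁ t f ≤ N₀ g + ENNReal.ofReal t * N₁ (f - g) := iInf_le _ g

theorem Kf_scale (N₀ N₁ : E → ℝ≥0∞) (f : E) {s t : ℝ} (hs : 0 < s) (h : s ≤ t) :
    Kf N₀ N₁ t f ≤ ENNReal.ofReal (t / s) * Kf N₀ N₁ s f := by
  have ht : 0 < t := hs.trans_le h
  have h1 : 1 ≤ t / s := by rwa [one_le_div hs]
  have hne : ENNReal.ofReal (t / s) ≠ 0 := by
    have : 0 < t / s := by positivity
    simpa using this
  conv_rhs => rw [Kf, ENNReal.mul_iInf_of_ne hne ENNReal.ofReal_ne_top]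
  refine le_iInf fun g => (Kf_le _ _ _ _ g).trans ?_
  rw [mul_add, ← mul_assoc, ← ENNReal.ofReal_mul (by positivity), div_mul_cancel₀ _ hs.ne']
  gcongr
  refine le_mul_of_one_le_left (by positivity) ?_
  rw [← ENNReal.ofReal_one]; gcongr

theorem Kf_HD (N₀ N₁ : E → ℝ≥0∞) (f : E) : HD (fun u => Kf N₀ N₁ u f) := by
  intro u v hu huv hv
  refine ⟨(Kf_scale N₀ N₁ f hu huv).trans ?_, (Kf_mono N₀ N₁ f huv).trans ?_⟩
  · gcongr
    rw [show (2 : ℝ≥0∞) = ENNReal.ofReal 2 by simp]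
    gcongr
    rwa [div_le_iff₀ hu]
  · exact le_mul_of_one_le_left (by positivity) (by norm_num)

theorem Kf_le_left (A₀ A₁ : QuasiBanach E) (t : ℝ) (f : E) : Kf A₀.N A₁.N t f ≤ A₀.N f := by
  simpa [A₁.zero] using Kf_le A₀.N A₁.N t f f

theorem Kf_le_right (A₀ A₁ : QuasiBanach E) (t : ℝ) (f : E) :
    Kf A₀.N A₁.N t f ≤ ENNReal.ofReal t * A₁.N f := by
  simpa [A₀.zero] using Kf_le A₀.N A₁.N t f 0

theorem QuasiBanach.neg (A : QuasiBanach E) (x : E) : A.N (-x) = A.N x := by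
  simpa using A.smul (-1) x

theorem Kf_neg (A₀ A₁ : QuasiBanach E) (t : ℝ) (f : E) :
    Kf A₀.N A₁.N t (-f) = Kf A₀.N A₁.N t f := by
  have : ∀ f, Kf A₀.N A₁.N t (-f) ≤ Kf A₀.N A₁.N t f := by
    intro f
    conv_rhs => rw [Kf]
    refine le_iInf fun g => (Kf_le _ _ _ _ (-g)).trans ?_
    rw [A₀.neg, ← A₁.neg, show -(-f - -g) = f - g by abel]
  refine le_antisymm (this f) ?_
  simpa using this (-f)

theorem Kf_add (A₀ A₁ : QuasiBanach E) : ∃ C : ℝ≥0∞, C ≠ ∞ ∧ ∀ t f g,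
    Kf A₀.N A₁.N t (f + g) ≤ C * (Kf A₀.N A₁.N t f + Kf A₀.N A₁.N t g) := by
  obtain ⟨C₀, h0, h0', H0⟩ := A₀.quasi
  obtain ⟨C₁, h1, h1', H1⟩ := A₁.quasi
  refine ⟨C₀ + C₁, by finiteness, fun t f g => ?_⟩
  have hne : C₀ + C₁ ≠ 0 := (lt_of_lt_of_le one_pos (h0.trans le_self_add)).ne'
  conv_rhs => rw [Kf, ENNReal.iInf_add, ENNReal.mul_iInf_of_ne hne (by finiteness)]
  refine le_iInf fun x => ?_
  rw [Kf, Kf, ENNReal.add_iInf, ENNReal.mul_iInf_of_ne hne (by finiteness)]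
  refine le_iInf fun y => (Kf_le _ _ _ _ (x + y)).trans ?_
  rw [show f + g - (x + y) = (f - x) + (g - y) by abel]
  calc A₀.N (x + y) + ENNReal.ofReal t * A₁.N ((f - x) + (g - y))
      ≤ C₀ * (A₀.N x + A₀.N y) + ENNReal.ofReal t * (C₁ * (A₁.N (f - x) + A₁.N (g - y))) := by
        gcongr
        · exact H0 _ _
        · exact H1 _ _
    _ ≤ (C₀ + C₁) * (A₀.N x + A₀.N y) +
          ENNReal.ofReal t * ((C₀ + C₁) * (A₁.N (f - x) + A₁.N (g - y))) := by
        gcongr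
        · exact le_self_add
        · exact le_add_self
    _ = _ := by ring

theorem Kf_tri (A₀ A₁ : QuasiBanach E) : ∃ C : ℝ≥0∞, C ≠ ∞ ∧ ∀ t f g,
    Kf A₀.N A₁.N t f ≤ C * (Kf A₀.N A₁.N t g + Kf A₀.N A₁.N t (f - g)) ∧
    Kf A₀.N A₁.N t g ≤ C * (Kf A₀.N A₁.N t f + Kf A₀.N A₁.N t (f - g)) ∧
    Kf A₀.N A₁.N t (f - g) ≤ C * (Kf A₀.N A₁.N t f + Kf A₀.N A₁.N t g) := by
  obtain ⟨C, hC, H⟩ := Kf_add A₀ A₁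
  refine ⟨C, hC, fun t f g => ⟨?_, ?_, ?_⟩⟩
  · simpa using H t g (f - g)
  · have := H t f (-(f - g))
    rwa [Kf_neg, show f + -(f - g) = g by abel] at this
  · have := H t f (-g)
    rwa [Kf_neg, ← sub_eq_add_neg] at this

theorem geo_neg {lam : ℝ} (hl : 0 < lam) (δ : ℝ) {j : ℤ} (hj : j ≤ 0) :
    ENNReal.ofReal ((lam ^ j) ^ δ) = geo (lam ^ (-δ)) j := by
  rw [geo]
  congr 1
  obtain ⟨n, rfl⟩ : ∃ n : ℕ, j = -n := ⟨j.natAbs, by omega⟩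
  rw [Int.natAbs_neg, Int.natAbs_natCast, zpow_neg, zpow_natCast, Real.inv_rpow (by positivity),
    Real.rpow_neg hl.le, inv_pow, ← Real.rpow_natCast, ← Real.rpow_natCast, ← Real.rpow_mul hl.le,
    ← Real.rpow_mul hl.le, mul_comm]

theorem geo_pos {lam : ℝ} (hl : 0 < lam) (δ : ℝ) {j : ℤ} (hj : 0 ≤ j) :
    ENNReal.ofReal (((lam ^ j)⁻¹) ^ δ) = geo (lam ^ (-δ)) j := by
  rw [← zpow_neg, geo_neg hl δ (by omega), geo, geo, Int.natAbs_neg]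

theorem gam_pos {lam : ℝ} (hl : 1 < lam) (δ : ℝ) : 0 < lam ^ (-δ) := by positivity

theorem gam_lt {lam : ℝ} (hl : 1 < lam) {δ : ℝ} (hd : 0 < δ) : lam ^ (-δ) < 1 :=
  Real.rpow_lt_one_of_one_lt_of_neg hl (by linarith)

/-- the truncated functional -/
def Jt (N₀ N₁ : E → ℝ≥0∞) (θ : ℝ) (q : ℝ≥0∞) (a : ℝ → ℝ) (t : ℝ) (f : E) : ℝ≥0∞ :=
  LqNorm q (Ioo 0 t) (Fw q θ a (fun u => Kf N₀ N₁ u f))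

theorem normK_eq (N₀ N₁ : E → ℝ≥0∞) (θ : ℝ) (q : ℝ≥0∞) (a : ℝ → ℝ) (f : E) :
    normK N₀ N₁ θ q a f = LqNorm q (Ioi 0) (Fw q θ a (fun u => Kf N₀ N₁ u f)) := rfl

/-- first condition on the second space -/
def Cond1 (A₀ A₁ : QuasiBanach E) (N₁ : E → ℝ≥0∞) (ρ : ℝ → ℝ) : Prop :=
  ∃ C : ℝ≥0∞, C ≠ ∞ ∧ ∀ t, 0 < t → ∀ h, Kf A₀.N A₁.N t h ≤ C * (ENNReal.ofReal (ρ t) * N₁ h)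

/-- second condition on the second space -/
def Cond2 (A₀ A₁ : QuasiBanach E) (N₁ : E → ℝ≥0∞) (ρ : ℝ → ℝ) (η : ℝ) : Prop :=
  ∃ C : ℝ≥0∞, C ≠ ∞ ∧ ∀ t, 0 < t → ∀ f g M,
    (∀ s, t ≤ s → ENNReal.ofReal ((t / s) ^ η) * Kf A₀.N A₁.N s f ≤ M) →
    ENNReal.ofReal (ρ t) * N₁ (f - g) ≤
      C * ((A₀.N g + ENNReal.ofReal t * A₁.N (f - g)) + M)

theorem neg1_le (x : ℤ → ℝ≥0∞) (j : ℤ) : neg1 x j ≤ x j := by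
  unfold neg1; split_ifs <;> simp

theorem claimA (A₀ A₁ : QuasiBanach E) (N₁ : E → ℝ≥0∞) {ρ σ a : ℝ → ℝ} {q : ℝ≥0∞} (hq0 : 0 < q)
    (ha : SVr a) (θ : ℝ) (h1 : Cond1 A₀ A₁ N₁ ρ) {δ : ℝ} (hδ : 0 < δ)
    (hφ : UpR (fun t => wt θ a t * ρ t) δ)
    (hσ : ∃ Cσ : ℝ, 0 < Cσ ∧ ∀ t, 0 < t → wt θ a t * ρ t ≤ Cσ * σ t) :
    ∃ C : ℝ≥0∞, C ≠ ∞ ∧ ∀ t, 0 < t → ∀ f,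
      Jt A₀.N A₁.N θ q a t f ≤ C * Kf (normK A₀.N A₁.N θ q a) N₁ (σ t) f := by
  obtain ⟨C1, hC1, D⟩ := disc hq0 ha θ
  obtain ⟨C2, hC2, T⟩ := Kf_tri A₀ A₁
  obtain ⟨C3, hC3, Ad⟩ := lq_add hq0
  obtain ⟨C4, hC4, H4⟩ := h1
  obtain ⟨C5, hC5, H5⟩ := hφ
  obtain ⟨C6, hC6, H6⟩ := hσ
  have hG := lq_geo hq0 (gam_pos one_lt_two δ) (gam_lt one_lt_two hδ)
  set γ : ℝ := 2 ^ (-δ)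
  set G := lq q (geo γ)
  refine ⟨C1 * (C2 * (C3 * (C1 + C4 * ENNReal.ofReal (C5 * C6) * G))), by finiteness,
    fun t ht f => ?_⟩
  rw [Kf, ENNReal.mul_iInf (fun h => absurd h (by finiteness))]
  refine le_iInf fun g => ?_
  have e1 := (D t ht _ (Kf_HD A₀.N A₁.N f)).1.2
  have e2 : lq q (neg1 (ds θ a (fun u => Kf A₀.N A₁.N u g) t)) ≤ C1 * normK A₀.N A₁.N θ q a g :=
    (lq_mono (neg1_le _)).trans (D t ht _ (Kf_HD A₀.N A₁.N g)).2.1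
  have e3 : lq q (neg1 (ds θ a (fun u => Kf A₀.N A₁.N u (f - g)) t)) ≤
      C4 * ENNReal.ofReal (C5 * C6) * (ENNReal.ofReal (σ t) * N₁ (f - g)) * G := by
    rw [← lq_const hq0]
    refine lq_mono fun j => ?_
    unfold neg1
    split_ifs with hj
    · have hp : 0 < t * (2 : ℝ) ^ j := by positivity
      have hpt : t * (2 : ℝ) ^ j ≤ t := by
        have : (2 : ℝ) ^ j ≤ 1 := zpow_le_one_of_nonpos₀ (by norm_num) hj.le
        nlinarith
      have hr : t * (2 : ℝ) ^ j / t = 2 ^ j := by field_simp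
      have h5 := H5 _ _ hp hpt
      have hw := ha.wt_pos θ hp
      rw [hr] at h5
      calc ds θ a (fun u => Kf A₀.N A₁.N u (f - g)) t j
          ≤ ENNReal.ofReal (wt θ a (t * 2 ^ j)) *
              (C4 * (ENNReal.ofReal (ρ (t * 2 ^ j)) * N₁ (f - g))) := by
            unfold ds; gcongr; exact H4 _ hp _
        _ = C4 * (ENNReal.ofReal (wt θ a (t * 2 ^ j) * ρ (t * 2 ^ j)) * N₁ (f - g)) := by
            rw [ENNReal.ofReal_mul hw.le]; ring
        _ ≤ C4 * (ENNReal.ofReal ((C5 * C6) * ((2 ^ j) ^ δ * σ t)) * N₁ (f - g)) := by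
            have h6 := H6 t ht
            gcongr C4 * (ENNReal.ofReal ?_ * _)
            calc _ ≤ _ := h5
              _ ≤ C5 * (2 ^ j) ^ δ * (C6 * σ t) := by gcongr
              _ = _ := by ring
        _ = _ := by
            rw [ENNReal.ofReal_mul (p := C5 * C6) (by positivity),
              ENNReal.ofReal_mul (p := (2 ^ j) ^ δ) (by positivity), geo_neg two_pos δ hj.le]
            ring
    · simp
  have e4 : lq q (neg1 (ds θ a (fun u => Kf A₀.N A₁.N u f) t)) ≤
      C2 * (C3 * (lq q (neg1 (ds θ a (fun u => Kf A₀.N A₁.N u g) t)) +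
        lq q (neg1 (ds θ a (fun u => Kf A₀.N A₁.N u (f - g)) t)))) := by
    refine le_trans ?_ (mul_le_mul_right (Ad _ _) C2)
    rw [← lq_const hq0]
    refine lq_mono fun j => ?_
    unfold neg1
    split_ifs with hj
    · unfold ds
      rw [← mul_add, mul_left_comm]
      gcongr
      exact (T _ f g).1
    · simp
  calc _ ≤ _ := e1
    _ ≤ C1 * (C2 * (C3 * (C1 * normK A₀.N A₁.N θ q a g +
          C4 * ENNReal.ofReal (C5 * C6) * (ENNReal.ofReal (σ t) * N₁ (f - g)) * G))) := by
        gcongr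
        refine e4.trans ?_
        gcongr
    _ ≤ C1 * (C2 * (C3 * ((C1 + C4 * ENNReal.ofReal (C5 * C6) * G) * normK A₀.N A₁.N θ q a g +
          (C1 + C4 * ENNReal.ofReal (C5 * C6) * G) * (ENNReal.ofReal (σ t) * N₁ (f - g))))) := by
        gcongr C1 * (C2 * (C3 * (?_ + ?_)))
        · gcongr; exact le_self_add
        · rw [mul_right_comm]; gcongr; exact le_add_self
    _ = _ := by ring

theorem wK_le_J (A₀ A₁ : QuasiBanach E) {a : ℝ → ℝ} {q : ℝ≥0∞} (hq0 : 0 < q)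
    (ha : SVr a) (θ : ℝ) : ∃ C : ℝ≥0∞, C ≠ ∞ ∧ ∀ t, 0 < t → ∀ f,
      ENNReal.ofReal (wt θ a t) * Kf A₀.N A₁.N t f ≤ C * Jt A₀.N A₁.N θ q a t f := by
  obtain ⟨C1, hC1, D⟩ := disc hq0 ha θ
  obtain ⟨W, hW, hw⟩ := ha.wt_comp θ 2 (by norm_num)
  refine ⟨ENNReal.ofReal W * 2 * C1, by finiteness, fun t ht f => ?_⟩
  have e1 := (D t ht _ (Kf_HD A₀.N A₁.N f)).2.2
  have e2 := (le_lq hq0 (neg1 (ds θ a (fun u => Kf A₀.N A₁.N u f) t)) (-1)).trans e1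
  rw [neg1, if_pos (by norm_num), ds] at e2
  have hp : 0 < t * (2 : ℝ) ^ (-1 : ℤ) := by positivity
  have hp1 : t * (2 : ℝ) ^ (-1 : ℤ) ≤ t := by rw [zpow_neg_one]; linarith
  have hp2 : t ≤ 2 * (t * (2 : ℝ) ^ (-1 : ℤ)) := by rw [zpow_neg_one]; linarith
  calc _ ≤ ENNReal.ofReal (W * wt θ a (t * (2 : ℝ) ^ (-1 : ℤ))) *
        (2 * Kf A₀.N A₁.N (t * (2 : ℝ) ^ (-1 : ℤ)) f) := by
        gcongr
        · exact (hw _ _ hp hp1 hp2).1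
        · exact (Kf_HD A₀.N A₁.N f _ _ hp hp1 hp2).1
    _ = ENNReal.ofReal W * 2 * (ENNReal.ofReal (wt θ a (t * (2 : ℝ) ^ (-1 : ℤ))) *
        (Kf A₀.N A₁.N (t * (2 : ℝ) ^ (-1 : ℤ)) f)) := by
        rw [ENNReal.ofReal_mul hW.le]; ring
    _ ≤ ENNReal.ofReal W * 2 * (C1 * Jt A₀.N A₁.N θ q a t f) := by
        gcongr _ * ?_; exact e2
    _ = _ := by ring

theorem n0_le (A₀ A₁ : QuasiBanach E) {a : ℝ → ℝ} {q : ℝ≥0∞} (hq0 : 0 < q)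
    (ha : SVr a) {θ : ℝ} (hθ : 0 < θ) (hθ1 : θ < 1) : ∃ C : ℝ≥0∞, C ≠ ∞ ∧ ∀ t, 0 < t → ∀ f g,
      normK A₀.N A₁.N θ q a g ≤ C * (Jt A₀.N A₁.N θ q a t f +
        ENNReal.ofReal (wt θ a t) * (A₀.N g + ENNReal.ofReal t * A₁.N (f - g))) := by
  obtain ⟨δ, hδ, hδ1, hδ2⟩ : ∃ δ : ℝ, 0 < δ ∧ δ < θ ∧ δ < 1 - θ :=
    ⟨min θ (1 - θ) / 2, by have : 0 < min θ (1 - θ) := lt_min hθ (by linarith)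
                           linarith,
      by have := min_le_left θ (1 - θ); linarith, by
        have := min_le_right θ (1 - θ); linarith⟩
  obtain ⟨C1, hC1, D⟩ := disc hq0 ha θ
  obtain ⟨C2, hC2, T⟩ := Kf_tri A₀ A₁
  obtain ⟨C3, hC3, Ad⟩ := lq_add hq0
  obtain ⟨C4, hC4, H4⟩ := ha.dnR (β := -θ) (δ := δ) (by linarith)
  obtain ⟨C5, hC5, H5⟩ := ha.upR (β := 1 - θ) (δ := δ) (by linarith)
  have hG := lq_geo hq0 (gam_pos one_lt_two δ) (gam_lt one_lt_two hδ)
  set γ : ℝ := 2 ^ (-δ)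
  set G := lq q (geo γ)
  have h5' : ∀ s, 0 < s → s * wt θ a s = s ^ (1 - θ) * a s := by
    intro s hs
    rw [wt, ← mul_assoc, sub_eq_add_neg, Real.rpow_add hs, Real.rpow_one]
  refine ⟨C1 * (C3 * (C2 * C1 + (C2 * ENNReal.ofReal C5 + ENNReal.ofReal C4) * G)), by finiteness,
    fun t ht f g => ?_⟩
  set Dd := A₀.N g + ENNReal.ofReal t * A₁.N (f - g)
  have hwt := ha.wt_pos θ ht
  have key : ∀ j, ds θ a (fun u => Kf A₀.N A₁.N u g) t j ≤
      C2 * neg1 (ds θ a (fun u => Kf A₀.N A₁.N u f) t) j +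
      ((C2 * ENNReal.ofReal C5 + ENNReal.ofReal C4) * (ENNReal.ofReal (wt θ a t) * Dd)) *
        geo γ j := by
    intro j
    have hp : 0 < t * (2 : ℝ) ^ j := by positivity
    have hw := ha.wt_pos θ hp
    by_cases hj : j < 0
    · have hpt : t * (2 : ℝ) ^ j ≤ t := by
        have : (2 : ℝ) ^ j ≤ 1 := zpow_le_one_of_nonpos₀ (by norm_num) hj.le
        nlinarith
      have hr : t * (2 : ℝ) ^ j / t = 2 ^ j := by field_simp
      have h5 := H5 _ _ hp hpt
      dsimp only at h5
      rw [hr, ← h5' _ hp, ← h5' _ ht] at h5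
      rw [neg1, if_pos hj]
      have k1 : ENNReal.ofReal (wt θ a (t * 2 ^ j)) * Kf A₀.N A₁.N (t * 2 ^ j) (f - g) ≤
          ENNReal.ofReal C5 * (ENNReal.ofReal (wt θ a t) * Dd) * geo γ j := by
        calc _ ≤ ENNReal.ofReal (wt θ a (t * 2 ^ j)) *
              (ENNReal.ofReal (t * 2 ^ j) * A₁.N (f - g)) := by
              gcongr; exact Kf_le_right A₀ A₁ _ _
          _ = ENNReal.ofReal (t * 2 ^ j * wt θ a (t * 2 ^ j)) * A₁.N (f - g) := by
              rw [ENNReal.ofReal_mul hp.le]; ring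
          _ ≤ ENNReal.ofReal (C5 * (2 ^ j) ^ δ * (t * wt θ a t)) * A₁.N (f - g) := by
              gcongr
          _ = ENNReal.ofReal C5 * (ENNReal.ofReal (wt θ a t) * (ENNReal.ofReal t * A₁.N (f - g)))
                * geo γ j := by
              rw [ENNReal.ofReal_mul (by positivity), ENNReal.ofReal_mul (by positivity),
                ENNReal.ofReal_mul (by positivity), geo_neg two_pos δ hj.le]
              ring
          _ ≤ _ := by gcongr; exact le_add_self
      calc ds θ a (fun u => Kf A₀.N A₁.N u g) t j
          ≤ ENNReal.ofReal (wt θ a (t * 2 ^ j)) *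
            (C2 * (Kf A₀.N A₁.N (t * 2 ^ j) f + Kf A₀.N A₁.N (t * 2 ^ j) (f - g))) := by
            unfold ds; gcongr; exact (T _ f g).2.1
        _ = C2 * ds θ a (fun u => Kf A₀.N A₁.N u f) t j +
            C2 * (ENNReal.ofReal (wt θ a (t * 2 ^ j)) * Kf A₀.N A₁.N (t * 2 ^ j) (f - g)) := by
            unfold ds; ring
        _ ≤ C2 * ds θ a (fun u => Kf A₀.N A₁.N u f) t j +
            C2 * (ENNReal.ofReal C5 * (ENNReal.ofReal (wt θ a t) * Dd) * geo γ j) := by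
            gcongr C2 * _ + C2 * ?_
        _ = C2 * ds θ a (fun u => Kf A₀.N A₁.N u f) t j +
            (C2 * ENNReal.ofReal C5) * (ENNReal.ofReal (wt θ a t) * Dd) * geo γ j := by ring
        _ ≤ _ := by gcongr; exact le_self_add
    · rw [not_lt] at hj
      have hpt : t ≤ t * (2 : ℝ) ^ j := by
        have : 1 ≤ (2 : ℝ) ^ j := one_le_zpow₀ (by norm_num) hj
        nlinarith
      have hr : t / (t * (2 : ℝ) ^ j) = (2 ^ j)⁻¹ := by field_simp
      have h4 := H4 _ _ ht hpt
      rw [hr] at h4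
      change wt θ a _ ≤ _ * wt θ a t at h4
      calc ds θ a (fun u => Kf A₀.N A₁.N u g) t j
          ≤ ENNReal.ofReal (C4 * ((2 ^ j)⁻¹) ^ δ * wt θ a t) * A₀.N g := by
            unfold ds; gcongr; exact Kf_le_left A₀ A₁ _ _
        _ = ENNReal.ofReal C4 * (ENNReal.ofReal (wt θ a t) * A₀.N g) * geo γ j := by
            rw [ENNReal.ofReal_mul (by positivity), ENNReal.ofReal_mul (by positivity),
              geo_pos two_pos δ hj]
            ring
        _ ≤ (C2 * ENNReal.ofReal C5 + ENNReal.ofReal C4) * (ENNReal.ofReal (wt θ a t) * Dd) *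
              geo γ j := by
            gcongr
            · exact le_add_self
            · exact le_self_add
        _ ≤ _ := le_add_self
  have e1 := (D t ht _ (Kf_HD A₀.N A₁.N g)).1.1
  have e2 := (D t ht _ (Kf_HD A₀.N A₁.N f)).2.2
  change _ ≤ _ * Jt A₀.N A₁.N θ q a t f at e2
  calc _ ≤ _ := e1
    _ ≤ C1 * (C3 * (C2 * (C1 * Jt A₀.N A₁.N θ q a t f) +
        ((C2 * ENNReal.ofReal C5 + ENNReal.ofReal C4) * (ENNReal.ofReal (wt θ a t) * Dd)) * G)) := by
        gcongr
        refine (lq_mono key).trans ((Ad _ _).trans ?_)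
        rw [lq_const hq0, lq_const hq0]
        gcongr
    _ = C1 * (C3 * ((C2 * C1) * Jt A₀.N A₁.N θ q a t f +
        ((C2 * ENNReal.ofReal C5 + ENNReal.ofReal C4) * G) * (ENNReal.ofReal (wt θ a t) * Dd))) := by
        ring
    _ ≤ C1 * (C3 * ((C2 * C1 + (C2 * ENNReal.ofReal C5 + ENNReal.ofReal C4) * G) *
          Jt A₀.N A₁.N θ q a t f +
        (C2 * C1 + (C2 * ENNReal.ofReal C5 + ENNReal.ofReal C4) * G) *
          (ENNReal.ofReal (wt θ a t) * Dd))) := by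
        gcongr C1 * (C3 * (?_ * _ + ?_ * _))
        · exact le_self_add
        · exact le_add_self
    _ = _ := by ring

theorem claimB (A₀ A₁ : QuasiBanach E) (N₁ : E → ℝ≥0∞) {ρ σ a : ℝ → ℝ} {q : ℝ≥0∞} (hq0 : 0 < q)
    (ha : SVr a) {θ : ℝ} (hθ : 0 < θ) (hθ1 : θ < 1) {η : ℝ} (hη : θ < η)
    (h2 : Cond2 A₀ A₁ N₁ ρ η)
    (hσ : ∃ Cσ : ℝ, 0 < Cσ ∧ ∀ t, 0 < t → σ t ≤ Cσ * (wt θ a t * ρ t)) :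
    ∃ C : ℝ≥0∞, C ≠ ∞ ∧ ∀ t, 0 < t → ∀ f M,
      (∀ s, t ≤ s → ENNReal.ofReal ((t / s) ^ ((η - θ) / 2)) * Jt A₀.N A₁.N θ q a s f ≤ M) →
      Kf (normK A₀.N A₁.N θ q a) N₁ (σ t) f ≤ C * M := by
  obtain ⟨C1, hC1, H1⟩ := n0_le A₀ A₁ hq0 ha hθ hθ1
  obtain ⟨C2, hC2, H2⟩ := wK_le_J A₀ A₁ hq0 ha θ
  obtain ⟨C3, hC3, H3⟩ := h2
  obtain ⟨C4, hC4, H4⟩ := hσ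
  obtain ⟨C5, hC5, H5⟩ := ha.upR (β := -θ) (δ := -θ - (η - θ) / 2) (by linarith)
  set ε := (η - θ) / 2 with hε
  refine ⟨(C1 + ENNReal.ofReal C4 * C3 * (ENNReal.ofReal C5 * C2)) +
    (C1 + ENNReal.ofReal C4 * C3) * C2, by finiteness, fun t ht f M hM => ?_⟩
  have hw := ha.wt_pos θ ht
  have hw0 : ENNReal.ofReal (wt θ a t) ≠ 0 := by simpa using hw
  have hwt : ENNReal.ofReal (wt θ a t) ≠ ∞ := ENNReal.ofReal_ne_top
  have hJ : Jt A₀.N A₁.N θ q a t f ≤ M := by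
    have := hM t le_rfl
    rwa [div_self ht.ne', Real.one_rpow, ENNReal.ofReal_one, one_mul] at this
  set X := ENNReal.ofReal C5 * C2 * M with hX
  have hS : ∀ s, t ≤ s → ENNReal.ofReal ((t / s) ^ η) * Kf A₀.N A₁.N s f ≤
      X / ENNReal.ofReal (wt θ a t) := by
    intro s hs
    have hs0 : 0 < s := ht.trans_le hs
    rw [ENNReal.le_div_iff_mul_le (Or.inl hw0) (Or.inl hwt)]
    have hts : 0 < t / s := by positivity
    have h5 : wt θ a t ≤ C5 * (t / s) ^ (-θ - ε) * wt θ a s := H5 t s ht hs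
    have hws := ha.wt_pos θ hs0
    calc ENNReal.ofReal ((t / s) ^ η) * Kf A₀.N A₁.N s f * ENNReal.ofReal (wt θ a t)
        = ENNReal.ofReal ((t / s) ^ η * wt θ a t) * Kf A₀.N A₁.N s f := by
          rw [ENNReal.ofReal_mul (by positivity)]; ring
      _ ≤ ENNReal.ofReal ((t / s) ^ η * (C5 * (t / s) ^ (-θ - ε) * wt θ a s)) *
            Kf A₀.N A₁.N s f := by gcongr
      _ = ENNReal.ofReal (C5 * ((t / s) ^ ε * wt θ a s)) * Kf A₀.N A₁.N s f := by
          congr 2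
          have : (t / s) ^ ε = (t / s) ^ η * (t / s) ^ (-θ - ε) := by
            rw [← Real.rpow_add hts]; congr 1; rw [hε]; ring
          rw [this]; ring
      _ = ENNReal.ofReal C5 * (ENNReal.ofReal ((t / s) ^ ε) *
            (ENNReal.ofReal (wt θ a s) * Kf A₀.N A₁.N s f)) := by
          rw [ENNReal.ofReal_mul (by positivity), ENNReal.ofReal_mul (by positivity)]; ring
      _ ≤ ENNReal.ofReal C5 * (ENNReal.ofReal ((t / s) ^ ε) *
            (C2 * Jt A₀.N A₁.N θ q a s f)) := by
          gcongr ENNReal.ofReal C5 * (_ * ?_)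
          exact H2 s hs0 f
      _ = ENNReal.ofReal C5 * C2 * (ENNReal.ofReal ((t / s) ^ ε) * Jt A₀.N A₁.N θ q a s f) := by
          ring
      _ ≤ X := by rw [hX]; gcongr; exact hM s hs
  have step : ∀ g, Kf (normK A₀.N A₁.N θ q a) N₁ (σ t) f ≤
      (C1 * M + ENNReal.ofReal C4 * C3 * X) + ((C1 + ENNReal.ofReal C4 * C3) *
        ENNReal.ofReal (wt θ a t)) * (A₀.N g + ENNReal.ofReal t * A₁.N (f - g)) := by
    intro g
    have h3 := H3 t ht f g _ hS
    set Dd := A₀.N g + ENNReal.ofReal t * A₁.N (f - g)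
    calc _ ≤ _ := Kf_le _ _ _ _ g
      _ ≤ C1 * (M + ENNReal.ofReal (wt θ a t) * Dd) +
          ENNReal.ofReal C4 * (ENNReal.ofReal (wt θ a t) *
            (C3 * (Dd + X / ENNReal.ofReal (wt θ a t)))) := by
          refine add_le_add ((H1 t ht f g).trans ?_) ?_
          · gcongr
          · calc ENNReal.ofReal (σ t) * N₁ (f - g)
                ≤ ENNReal.ofReal (C4 * (wt θ a t * ρ t)) * N₁ (f - g) := by
                  gcongr; exact H4 t ht
              _ = ENNReal.ofReal C4 * (ENNReal.ofReal (wt θ a t) *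
                    (ENNReal.ofReal (ρ t) * N₁ (f - g))) := by
                  rw [ENNReal.ofReal_mul hC4.le, ENNReal.ofReal_mul hw.le]; ring
              _ ≤ _ := by gcongr _ * (_ * ?_)
      _ = C1 * (M + ENNReal.ofReal (wt θ a t) * Dd) +
          ENNReal.ofReal C4 * (C3 * (ENNReal.ofReal (wt θ a t) * Dd +
            (ENNReal.ofReal (wt θ a t) * (X / ENNReal.ofReal (wt θ a t))))) := by ring
      _ = _ := by
          rw [ENNReal.mul_div_cancel hw0 hwt]; ring
  have step2 : Kf (normK A₀.N A₁.N θ q a) N₁ (σ t) f ≤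
      (C1 * M + ENNReal.ofReal C4 * C3 * X) + ((C1 + ENNReal.ofReal C4 * C3) *
        ENNReal.ofReal (wt θ a t)) * Kf A₀.N A₁.N t f := by
    conv_rhs => rw [Kf, ENNReal.mul_iInf (fun h => absurd h (by finiteness)), ENNReal.add_iInf]
    exact le_iInf step
  calc _ ≤ _ := step2
    _ = (C1 * M + ENNReal.ofReal C4 * C3 * X) + (C1 + ENNReal.ofReal C4 * C3) *
        (ENNReal.ofReal (wt θ a t) * Kf A₀.N A₁.N t f) := by ring
    _ ≤ (C1 * M + ENNReal.ofReal C4 * C3 * X) + (C1 + ENNReal.ofReal C4 * C3) *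
        (C2 * M) := by
        gcongr _ + _ * ?_
        refine (H2 t ht f).trans ?_
        gcongr
    _ = _ := by rw [hX]; ring

theorem part_lower' {q : ℝ≥0∞} (hq0 : 0 < q) {M : ℝ} :
    ∃ C : ℝ≥0∞, C ≠ ∞ ∧ ∀ p, GeoPart M p →
    ∀ (F : ℝ → ℝ≥0∞) (c : ℤ → ℝ≥0∞) (V : ℝ≥0∞), V ≠ 0 → V ≠ ∞ →
    (∀ k, ∀ u ∈ Ico (p k) (p (k + 1)),
      ENNReal.ofReal (u ^ (-(q⁻¹.toReal))) * c k ≤ V * F u) →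
    lq q c ≤ C * V * LqNorm q (Ioi 0) F := by
  obtain ⟨C, hC, L⟩ := part_lower hq0 (M := M)
  refine ⟨C, hC, fun p hp F c V hV hV' h => ?_⟩
  have := L p hp (Ioi 0) measurableSet_Ioi F (fun k => V⁻¹ * c k) (fun k _ u hu => by
    refine ⟨(hp.pos k).trans_le hu.1, ?_⟩
    rw [mul_left_comm, mul_comm, ← div_eq_mul_inv]
    exact ENNReal.div_le_of_le_mul' (h k u hu))
  rw [lq_const hq0, mul_comm, ← div_eq_mul_inv, ENNReal.div_le_iff hV hV'] at this
  calc _ ≤ _ := this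
    _ = _ := by ring

theorem equivNorms_of {nX nY : E → ℝ≥0∞} {C₁ C₂ : ℝ≥0∞} (h1 : C₁ ≠ ∞) (h2 : C₂ ≠ ∞)
    (H1 : ∀ f, nX f ≤ C₁ * nY f) (H2 : ∀ f, nY f ≤ C₂ * nX f) : EquivNorms nX nY := by
  refine ⟨1 + C₁ + C₂, lt_of_lt_of_le one_pos (le_self_add.trans le_self_add), by finiteness,
    fun f => ⟨?_, ?_⟩⟩
  · rw [mul_comm, ← div_eq_mul_inv]
    refine ENNReal.div_le_of_le_mul' ((H2 f).trans ?_)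
    gcongr
    exact le_add_self
  · refine (H1 f).trans ?_
    gcongr
    exact le_add_self.trans le_self_add

theorem choose_lam {σ : ℝ → ℝ} {α : ℝ} (hα : 0 < α) {ℓ : ℝ → ℝ} (hl : SVr ℓ)
    (hσ : EquivOn (Ioi 0) σ (fun t => t ^ α * ℓ t)) :
    ∃ lam M : ℝ, 2 ≤ lam ∧ ∀ t, 0 < t → 2 * σ t ≤ σ (lam * t) ∧ σ (lam * t) ≤ M * σ t := by
  obtain ⟨C, hC, H⟩ := hσ
  obtain ⟨C5, hC5, H5⟩ := hl.upR (β := α) (δ := α / 2) (by linarith)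
  obtain ⟨C6, hC6, H6⟩ := hl.dnR (β := α) (δ := -(2 * α)) (by linarith)
  set φ : ℝ → ℝ := fun t => t ^ α * ℓ t with hφ
  set X := 2 * C * C * C5
  have hX : 0 < X := by positivity
  set lam := max 2 (X ^ (α / 2)⁻¹)
  have hl2 : 2 ≤ lam := le_max_left _ _
  have hl0 : 0 < lam := by linarith
  have hlX : X ≤ lam ^ (α / 2) := by
    calc X = (X ^ (α / 2)⁻¹) ^ (α / 2) := by
          rw [← Real.rpow_mul hX.le, inv_mul_cancel₀ (by positivity), Real.rpow_one]
      _ ≤ _ := Real.rpow_le_rpow (by positivity) (le_max_right _ _) (by positivity)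
  refine ⟨lam, C * C * C6 * (lam⁻¹) ^ (-(2 * α)), hl2, fun t ht => ?_⟩
  have hlt : 0 < lam * t := by positivity
  have htl : t ≤ lam * t := by nlinarith
  have hr : t / (lam * t) = lam⁻¹ := by field_simp
  have h5 := H5 t _ ht htl
  have h6 := H6 t _ ht htl
  rw [hr] at h5 h6
  have a1 := (H t ht).1
  have a2 := (H t ht).2
  have b1 := (H (lam * t) hlt).1
  have b2 := (H (lam * t) hlt).2
  rw [inv_mul_le_iff₀ hC] at a1 b1
  have hφp : 0 < φ t := mul_pos (Real.rpow_pos_of_pos ht _) (hl.1 t ht)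
  have hσ0 : 0 ≤ σ (lam * t) := by
    have : 0 < φ (lam * t) := mul_pos (Real.rpow_pos_of_pos hlt _) (hl.1 _ hlt)
    by_contra hc
    nlinarith
  have hlp : 0 < lam ^ (α / 2) := by positivity
  constructor
  · calc 2 * σ t ≤ 2 * (C * φ t) := by gcongr
      _ ≤ 2 * (C * (C5 * (lam⁻¹) ^ (α / 2) * φ (lam * t))) := by gcongr
      _ ≤ 2 * (C * (C5 * (lam⁻¹) ^ (α / 2) * (C * σ (lam * t)))) := by gcongr
      _ = (X / lam ^ (α / 2)) * σ (lam * t) := by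
          rw [Real.inv_rpow hl0.le]; simp only [X]; field_simp
      _ ≤ 1 * σ (lam * t) := by
          gcongr
          rwa [div_le_one hlp]
      _ = _ := one_mul _
  · calc σ (lam * t) ≤ C * φ (lam * t) := b2
      _ ≤ C * (C6 * (lam⁻¹) ^ (-(2 * α)) * φ t) := by gcongr
      _ ≤ C * (C6 * (lam⁻¹) ^ (-(2 * α)) * (C * σ t)) := by gcongr
      _ = _ := by ring

theorem wt_zero (z : ℝ → ℝ) (t : ℝ) : wt 0 z t = z t := by simp [wt]

theorem core (A₀ A₁ : QuasiBanach E) (N₁ : E → ℝ≥0∞) {ρ σ σinv a b ℓ : ℝ → ℝ} {q r : ℝ≥0∞}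
    (hq0 : 0 < q) (hr0 : 0 < r) (ha : SVr a) (hb : SVr b) (hl : SVr ℓ)
    {θ : ℝ} (hθ : 0 < θ) (hθ1 : θ < 1) {η : ℝ} (hη : θ < η)
    (h1 : Cond1 A₀ A₁ N₁ ρ) (h2 : Cond2 A₀ A₁ N₁ ρ η)
    {α : ℝ} (hα : 0 < α) (hρ : ∀ t, 0 < t → wt θ a t * ρ t = t ^ α * ℓ t)
    (hm : StrictMonoOn σ (Ioi 0))
    (hi1 : ∀ t ∈ Ioi (0:ℝ), σ t ∈ Ioi (0:ℝ) ∧ σinv (σ t) = t)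
    (hi2 : ∀ t ∈ Ioi (0:ℝ), σinv t ∈ Ioi (0:ℝ) ∧ σ (σinv t) = t)
    (hσ : EquivOn (Ioi 0) σ (fun t => t ^ α * ℓ t)) :
    EquivNorms (normK (normK A₀.N A₁.N θ q a) N₁ 0 r (fun t => b (σinv t) / a (σinv t)))
      (normL A₀.N A₁.N θ r q b a) := by
  obtain ⟨lam, M, hl2, hlam⟩ := choose_lam hα hl hσ
  have hl0 : 0 < lam := by linarith
  have hl1 : 1 < lam := by linarith
  have P : GeoPart lam (fun j : ℤ => lam ^ j) := by
    simpa using geoPart_pow one_pos hl2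
  have P' : GeoPart M (fun j : ℤ => σ (lam ^ j)) := by
    refine ⟨fun k => (hi1 _ (P.pos k)).1, fun k => ?_, fun k => ?_⟩
    · rw [zpow_add_one₀ hl0.ne', mul_comm (lam ^ k)]; exact (hlam _ (P.pos k)).1
    · rw [zpow_add_one₀ hl0.ne', mul_comm (lam ^ k)]; exact (hlam _ (P.pos k)).2
  have hz : SVr (fun t => b t / a t) := hb.div ha
  set z : ℝ → ℝ := fun t => b t / a t with hzdef
  obtain ⟨W, hW, hw⟩ := hz.wt_comp 0 lam hl1.le
  simp only [wt_zero] at hw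
  have hW0 : ENNReal.ofReal W ≠ 0 := by simpa using hW
  obtain ⟨CA, hCA, HA⟩ := claimA (σ := σ) A₀ A₁ N₁ hq0 ha θ h1 (δ := α / 2) (by linarith) (by
      obtain ⟨C, hC, H⟩ := hl.upR (β := α) (δ := α / 2) (by linarith)
      refine ⟨C, hC, fun s t hs hst => ?_⟩
      have := H s t hs hst
      dsimp only at this ⊢
      rwa [hρ s hs, hρ t (hs.trans_le hst)]) (by
      obtain ⟨C, hC, H⟩ := hσ
      refine ⟨C, hC, fun t ht => ?_⟩
      have := (H t ht).1
      rw [inv_mul_le_iff₀ hC] at this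
      rwa [hρ t ht])
  obtain ⟨CB, hCB, HB⟩ := claimB (σ := σ) A₀ A₁ N₁ hq0 ha hθ hθ1 hη h2 (by
      obtain ⟨C, hC, H⟩ := hσ
      refine ⟨C, hC, fun t ht => ?_⟩
      rw [hρ t ht]
      exact (H t ht).2)
  set ε := (η - θ) / 2 with hε
  have hε0 : 0 < ε := by rw [hε]; linarith
  set n₀ := normK A₀.N A₁.N θ q a
  set J := Jt A₀.N A₁.N θ q a
  have Jmono : ∀ f s t, s ≤ t → J s f ≤ J t f := by
    intro f s t hst
    have hsub : Ioo 0 s ⊆ Ioo 0 t := Ioo_subset_Ioo_right hst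
    change LqNorm q _ _ ≤ LqNorm q _ _
    unfold LqNorm
    split_ifs
    · exact essSup_mono_measure (Measure.restrict_mono hsub le_rfl).absolutelyContinuous
    · gcongr
  -- the four discretizations
  obtain ⟨D1, hD1, U1⟩ := part_upper hr0 (M := lam)
  obtain ⟨D2, hD2, L2⟩ := part_lower' hr0 (M := lam)
  obtain ⟨D3, hD3, U3⟩ := part_upper hr0 (M := M)
  obtain ⟨D4, hD4, L4⟩ := part_lower' hr0 (M := M)
  have step_le : ∀ k : ℤ, lam ^ k ≤ lam ^ (k + 1) := fun k => P.strictMono.monotone (by omega)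
  have succ_eq : ∀ k : ℤ, lam ^ (k + 1) = lam * lam ^ k := fun k => by
    rw [zpow_add_one₀ hl0.ne', mul_comm]
  have split : ∀ u : ℝ, 0 < u → ∀ y : ℝ, ENNReal.ofReal (u ^ (-(r⁻¹.toReal)) * y) =
      ENNReal.ofReal (u ^ (-(r⁻¹.toReal))) * ENNReal.ofReal y := fun u hu y =>
    ENNReal.ofReal_mul (by positivity)
  have Rup : ∀ f, normL A₀.N A₁.N θ r q b a f ≤
      (D1 * (ENNReal.ofReal W * ENNReal.ofReal W)) *
        lq r (fun k => ENNReal.ofReal (z (lam ^ k)) * J (lam ^ k) f) := by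
    intro f
    have := U1 _ P (Ioi 0) subset_rfl measurableSet_Ioi
      (fun t => ENNReal.ofReal (t ^ (-(r⁻¹.toReal)) * z t) * J t f)
      (fun k => (ENNReal.ofReal W * ENNReal.ofReal W) *
        (ENNReal.ofReal (z (lam ^ (k + 1))) * J (lam ^ (k + 1)) f)) (by
      intro k u hu hu0
      have hu2 := hu.2.le
      have hu3 : u ≤ lam * lam ^ k := by rw [← succ_eq]; exact hu2
      rw [split u hu0, mul_assoc]
      gcongr ENNReal.ofReal _ * ?_
      calc ENNReal.ofReal (z u) * J u f
          ≤ ENNReal.ofReal (W * (W * z (lam ^ (k + 1)))) * J (lam ^ (k + 1)) f := by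
            gcongr
            · refine ((hw _ _ (P.pos k) hu.1 hu3).1).trans ?_
              gcongr
              exact (hw _ _ (P.pos k) (step_le k) (succ_eq k).le).2
            · exact Jmono _ _ _ hu2
        _ = _ := by rw [ENNReal.ofReal_mul hW.le, ENNReal.ofReal_mul hW.le]; ring)
    rw [lq_const hr0, lq_shift (fun k => ENNReal.ofReal (z (lam ^ k)) * J (lam ^ k) f) 1,
      ← mul_assoc] at this
    exact this
  have Rlo : ∀ f, lq r (fun k => ENNReal.ofReal (z (lam ^ k)) * J (lam ^ k) f) ≤
      D2 * ENNReal.ofReal W * normL A₀.N A₁.N θ r q b a f := by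
    intro f
    refine L2 _ P (fun t => ENNReal.ofReal (t ^ (-(r⁻¹.toReal)) * z t) * J t f) _
      (ENNReal.ofReal W) hW0 ENNReal.ofReal_ne_top ?_
    intro k u hu
    have hu0 : 0 < u := (P.pos k).trans_le hu.1
    have hu3 : u ≤ lam * lam ^ k := by rw [← succ_eq]; exact hu.2.le
    rw [split u hu0, mul_assoc, mul_left_comm (ENNReal.ofReal W)]
    gcongr ENNReal.ofReal _ * ?_
    calc ENNReal.ofReal (z (lam ^ k)) * J (lam ^ k) f ≤ ENNReal.ofReal (W * z u) * J u f := by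
          gcongr
          · exact (hw _ _ (P.pos k) hu.1 hu3).2
          · exact Jmono _ _ _ hu.1
      _ = _ := by rw [ENNReal.ofReal_mul hW.le, mul_assoc]
  have inv_mem : ∀ k : ℤ, ∀ u ∈ Ico (σ (lam ^ k)) (σ (lam ^ (k + 1))),
      0 < u ∧ lam ^ k ≤ σinv u ∧ σinv u ≤ lam * lam ^ k := by
    intro k u hu
    have hu0 : 0 < u := (P'.pos k).trans_le hu.1
    obtain ⟨i1, i2⟩ := hi2 u hu0
    refine ⟨hu0, ?_, ?_⟩
    · rw [← hm.le_iff_le (P.pos k) i1, i2]; exact hu.1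
    · rw [← succ_eq, ← hm.le_iff_le i1 (P.pos (k + 1)), i2]; exact hu.2.le
  have Keq : ∀ f, normK n₀ N₁ 0 r (fun t => b (σinv t) / a (σinv t)) f =
      LqNorm r (Ioi 0) (fun u => ENNReal.ofReal (u ^ (-(r⁻¹.toReal)) * z (σinv u)) *
        Kf n₀ N₁ u f) := by
    intro f
    unfold normK
    simp only [neg_zero, zero_sub]
    rfl
  have Lup : ∀ f, normK n₀ N₁ 0 r (fun t => b (σinv t) / a (σinv t)) f ≤
      (D3 * (ENNReal.ofReal W * ENNReal.ofReal M)) *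
        lq r (fun k => ENNReal.ofReal (z (lam ^ k)) * Kf n₀ N₁ (σ (lam ^ k)) f) := by
    intro f
    rw [Keq]
    have := U3 _ P' (Ioi 0) subset_rfl measurableSet_Ioi
      (fun u => ENNReal.ofReal (u ^ (-(r⁻¹.toReal)) * z (σinv u)) * Kf n₀ N₁ u f)
      (fun k => (ENNReal.ofReal W * ENNReal.ofReal M) *
        (ENNReal.ofReal (z (lam ^ k)) * Kf n₀ N₁ (σ (lam ^ k)) f)) (by
      intro k u hu hu0
      obtain ⟨_, v1, v2⟩ := inv_mem k u hu
      rw [split u hu0, mul_assoc]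
      gcongr ENNReal.ofReal _ * ?_
      calc ENNReal.ofReal (z (σinv u)) * Kf n₀ N₁ u f
          ≤ ENNReal.ofReal (W * z (lam ^ k)) *
              (ENNReal.ofReal M * Kf n₀ N₁ (σ (lam ^ k)) f) := by
            gcongr
            · exact (hw _ _ (P.pos k) v1 v2).1
            · refine (Kf_scale n₀ N₁ f (P'.pos k) hu.1).trans ?_
              gcongr
              rw [div_le_iff₀ (P'.pos k)]
              exact hu.2.le.trans (P'.upp k)
        _ = _ := by rw [ENNReal.ofReal_mul hW.le]; ring)
    rw [lq_const hr0, ← mul_assoc] at this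
    exact this
  have Llo : ∀ f, lq r (fun k => ENNReal.ofReal (z (lam ^ k)) * Kf n₀ N₁ (σ (lam ^ k)) f) ≤
      D4 * ENNReal.ofReal W * normK n₀ N₁ 0 r (fun t => b (σinv t) / a (σinv t)) f := by
    intro f
    rw [Keq]
    refine L4 _ P' _ _ (ENNReal.ofReal W) hW0 ENNReal.ofReal_ne_top ?_
    intro k u hu
    obtain ⟨hu0, v1, v2⟩ := inv_mem k u hu
    rw [split u hu0, mul_assoc, mul_left_comm (ENNReal.ofReal W)]
    gcongr ENNReal.ofReal _ * ?_
    calc ENNReal.ofReal (z (lam ^ k)) * Kf n₀ N₁ (σ (lam ^ k)) f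
        ≤ ENNReal.ofReal (W * z (σinv u)) * Kf n₀ N₁ u f := by
          gcongr
          · exact (hw _ _ (P.pos k) v1 v2).2
          · exact Kf_mono _ _ _ hu.1
      _ = _ := by rw [ENNReal.ofReal_mul hW.le, mul_assoc]
  have JK : ∀ f, lq r (fun k => ENNReal.ofReal (z (lam ^ k)) * J (lam ^ k) f) ≤
      CA * lq r (fun k => ENNReal.ofReal (z (lam ^ k)) * Kf n₀ N₁ (σ (lam ^ k)) f) := by
    intro f
    rw [← lq_const hr0]
    refine lq_mono fun k => ?_
    rw [mul_left_comm]
    gcongr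
    exact HA _ (P.pos k) f
  obtain ⟨CH, hCH, HH⟩ := lq_hardy hr0 (gam_pos hl1 (ε / 2)) (gam_lt hl1 (half_pos hε0))
  obtain ⟨CZ, hCZ, HZ⟩ := hz.2 (ε / 2) (half_pos hε0)
  have KJ : ∀ f, lq r (fun k => ENNReal.ofReal (z (lam ^ k)) * Kf n₀ N₁ (σ (lam ^ k)) f) ≤
      CB * ENNReal.ofReal (CZ * lam ^ ε) * CH *
        lq r (fun k => ENNReal.ofReal (z (lam ^ k)) * J (lam ^ k) f) := by
    intro f
    rw [mul_assoc (CB * _)]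
    refine le_trans ?_ (mul_le_mul_right (HH _) _)
    rw [← lq_const hr0]
    refine lq_mono fun k => ?_
    set S := ⨆ j, geo (lam ^ (-(ε / 2))) (j - k) * (ENNReal.ofReal (z (lam ^ j)) * J (lam ^ j) f)
      with hS
    have hzk : 0 < z (lam ^ k) := hz.1 _ (P.pos k)
    have hz0 : ENNReal.ofReal (z (lam ^ k)) ≠ 0 := by simpa using hzk
    have hz1 : ENNReal.ofReal (z (lam ^ k)) ≠ ∞ := ENNReal.ofReal_ne_top
    have hb := HB _ (P.pos k) f
      (ENNReal.ofReal (CZ * lam ^ ε) * S / ENNReal.ofReal (z (lam ^ k))) (by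
      intro s hs
      have hs0 : 0 < s := (P.pos k).trans_le hs
      rw [ENNReal.le_div_iff_mul_le (Or.inl hz0) (Or.inl hz1)]
      obtain ⟨j, hj⟩ := P.cover hs0
      have hkj : k < j + 1 := P.strictMono.lt_iff_lt.1 (lt_of_le_of_lt hs hj.2)
      have hx : lam ^ k / lam ^ (j + 1) = (lam ^ (j + 1 - k))⁻¹ := by
        rw [zpow_sub₀ hl0.ne' (j + 1), inv_div]
      have hxp : 0 < lam ^ k / lam ^ (j + 1) := div_pos (P.pos k) (P.pos (j + 1))
      have hZ := (HZ (lam ^ k) (lam ^ (j + 1)) (P.pos k) (P.strictMono.monotone (by omega))).2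
      have hz2 : 0 < z (lam ^ (j + 1)) := hz.1 _ (P.pos (j + 1))
      have h1 : (lam ^ k / s) ^ ε ≤ lam ^ ε * (lam ^ k / lam ^ (j + 1)) ^ ε := by
        rw [← Real.mul_rpow hl0.le hxp.le]
        refine Real.rpow_le_rpow (by positivity) ?_ hε0.le
        rw [succ_eq]
        have hjj := P.pos j
        have hj1 : lam ^ j ≤ s := hj.1
        have : lam * (lam ^ k / (lam * lam ^ j)) = lam ^ k / lam ^ j := by field_simp
        rw [this]
        have := P.pos k
        gcongr
      calc ENNReal.ofReal ((lam ^ k / s) ^ ε) * J s f * ENNReal.ofReal (z (lam ^ k))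
          = ENNReal.ofReal ((lam ^ k / s) ^ ε * z (lam ^ k)) * J s f := by
            rw [ENNReal.ofReal_mul (by positivity)]; ring
        _ ≤ ENNReal.ofReal ((lam ^ ε * (lam ^ k / lam ^ (j + 1)) ^ ε) *
              (CZ * (lam ^ k / lam ^ (j + 1)) ^ (-(ε / 2)) * z (lam ^ (j + 1)))) *
              J (lam ^ (j + 1)) f := by
            gcongr
            exact Jmono _ _ _ hj.2.le
        _ = ENNReal.ofReal ((CZ * lam ^ ε) * ((((lam ^ (j + 1 - k))⁻¹) ^ (ε / 2)) *
              z (lam ^ (j + 1)))) * J (lam ^ (j + 1)) f := by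
            congr 2
            have : (lam ^ k / lam ^ (j + 1)) ^ (ε / 2) = (lam ^ k / lam ^ (j + 1)) ^ ε *
                (lam ^ k / lam ^ (j + 1)) ^ (-(ε / 2)) := by
              rw [← Real.rpow_add hxp]; congr 1; ring
            rw [← hx, this]; ring
        _ = ENNReal.ofReal (CZ * lam ^ ε) * (geo (lam ^ (-(ε / 2))) (j + 1 - k) *
              (ENNReal.ofReal (z (lam ^ (j + 1))) * J (lam ^ (j + 1)) f)) := by
            have hp0 : 0 < lam ^ (j + 1 - k) := by positivity
            rw [ENNReal.ofReal_mul (p := CZ * lam ^ ε) (by positivity),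
              ENNReal.ofReal_mul (p := ((lam ^ (j + 1 - k))⁻¹) ^ (ε / 2)) (by positivity),
              geo_pos hl0 (ε / 2) (by omega)]
            ring
        _ ≤ _ := by
            gcongr
            exact le_iSup (fun j => geo (lam ^ (-(ε / 2))) (j - k) *
              (ENNReal.ofReal (z (lam ^ j)) * J (lam ^ j) f)) (j + 1))
    calc ENNReal.ofReal (z (lam ^ k)) * Kf n₀ N₁ (σ (lam ^ k)) f
        ≤ ENNReal.ofReal (z (lam ^ k)) *
          (CB * (ENNReal.ofReal (CZ * lam ^ ε) * S / ENNReal.ofReal (z (lam ^ k)))) := by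
          gcongr
      _ = CB * (ENNReal.ofReal (z (lam ^ k)) *
          (ENNReal.ofReal (CZ * lam ^ ε) * S / ENNReal.ofReal (z (lam ^ k)))) := by ring
      _ = _ := by rw [ENNReal.mul_div_cancel hz0 hz1, mul_assoc]
  refine equivNorms_of
    (C₁ := (D3 * (ENNReal.ofReal W * ENNReal.ofReal M)) *
      (CB * ENNReal.ofReal (CZ * lam ^ ε) * CH * (D2 * ENNReal.ofReal W)))
    (C₂ := (D1 * (ENNReal.ofReal W * ENNReal.ofReal W)) * (CA * (D4 * ENNReal.ofReal W)))
    (by finiteness) (by finiteness) ?_ ?_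
  · intro f
    refine (Lup f).trans ?_
    rw [mul_assoc (D3 * _)]
    gcongr
    refine (KJ f).trans ?_
    rw [mul_assoc _ (D2 * _)]
    gcongr
    exact Rlo f
  · intro f
    refine (Rup f).trans ?_
    rw [mul_assoc (D1 * _)]
    gcongr
    refine (JK f).trans ?_
    rw [mul_assoc CA]
    gcongr
    exact Llo f

theorem cond2_of (A₀ A₁ : QuasiBanach E) {ρ a : ℝ → ℝ} {q : ℝ≥0∞} (hq0 : 0 < q) (ha : SVr a)
    {θ η η' : ℝ} (hη0 : 0 ≤ η) (hη : η < η') (hup : UpR ρ η')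
    (hv : ∃ C : ℝ, 0 < C ∧ ∀ t, 0 < t → wt θ a t * ρ t ≤ C)
    (h3 : ∃ C : ℝ≥0∞, C ≠ ∞ ∧ ∀ t, 0 < t → ENNReal.ofReal (ρ t) *
      lq q (neg1 (fun j => ENNReal.ofReal (wt θ a (t * 2 ^ j)) * ENNReal.ofReal (2 ^ j))) ≤ C) :
    Cond2 A₀ A₁ (normK A₀.N A₁.N θ q a) ρ η := by
  obtain ⟨Cd, hCd, HD'⟩ := disc hq0 ha θ
  obtain ⟨C2, hC2, T⟩ := Kf_tri A₀ A₁
  obtain ⟨C5, hC5, V⟩ := hv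
  obtain ⟨C6, hC6, U⟩ := hup
  obtain ⟨C3, hC3, W⟩ := h3
  obtain ⟨Ca, hCa, Add⟩ := lq_add hq0
  have hG := lq_geo hq0 (gam_pos (lam := 2) (by norm_num) (η' - η))
    (gam_lt (lam := 2) (by norm_num) (δ := η' - η) (by linarith))
  set γ : ℝ := 2 ^ (-(η' - η)) with hγ
  set K : ℝ≥0∞ := ENNReal.ofReal (C6 * C5) * C2 with hK
  have hKt : K ≠ ∞ := by rw [hK]; finiteness
  refine ⟨Cd * Ca * (C3 + K * lq q (geo γ)), by finiteness, fun t ht f g M hM => ?_⟩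
  set D := A₀.N g + ENNReal.ofReal t * A₁.N (f - g) with hD
  have key : ∀ j : ℤ, ENNReal.ofReal (ρ t) * ds θ a (fun u => Kf A₀.N A₁.N u (f - g)) t j ≤
      D * (ENNReal.ofReal (ρ t) * neg1 (fun j => ENNReal.ofReal (wt θ a (t * 2 ^ j)) *
        ENNReal.ofReal (2 ^ j)) j) + (K * (D + M)) * geo γ j := by
    intro j
    have h2j : (0:ℝ) < 2 ^ j := by positivity
    by_cases hj : j < 0
    · refine le_trans ?_ le_self_add
      rw [neg1, if_pos hj, ds]
      have h1 : Kf A₀.N A₁.N (t * 2 ^ j) (f - g) ≤ ENNReal.ofReal (2 ^ j) * D := by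
        refine (Kf_le_right A₀ A₁ _ _).trans ?_
        rw [ENNReal.ofReal_mul ht.le, mul_comm (ENNReal.ofReal t), mul_assoc]
        gcongr ENNReal.ofReal _ * ?_
        exact le_add_self
      calc _ ≤ ENNReal.ofReal (ρ t) * (ENNReal.ofReal (wt θ a (t * 2 ^ j)) *
            (ENNReal.ofReal (2 ^ j) * D)) := by gcongr
        _ = _ := by ring
    · refine le_trans ?_ le_add_self
      have hj' : 0 ≤ j := not_lt.1 hj
      have h1j : (1:ℝ) ≤ 2 ^ j := one_le_zpow₀ (by norm_num) hj'
      have hts : t ≤ t * 2 ^ j := le_mul_of_one_le_right ht.le h1j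
      have hdiv : t / (t * 2 ^ j) = (2 ^ j)⁻¹ := by field_simp
      have hsp : 0 < t * 2 ^ j := by positivity
      have u1 := U t _ ht hts
      have v1 := V _ hsp
      have m1 := hM _ hts
      rw [hdiv] at u1 m1
      have hwp := ha.wt_pos θ hsp
      have e1 : ρ t * wt θ a (t * 2 ^ j) ≤
          (C6 * C5) * ((((2:ℝ) ^ j)⁻¹) ^ (η' - η) * (((2:ℝ) ^ j)⁻¹) ^ η) := by
        rw [← Real.rpow_add (by positivity)]
        have : η' - η + η = η' := by ring
        rw [this]
        calc ρ t * wt θ a (t * 2 ^ j)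
            ≤ (C6 * (((2:ℝ) ^ j)⁻¹) ^ η' * ρ (t * 2 ^ j)) * wt θ a (t * 2 ^ j) := by gcongr
          _ = C6 * (((2:ℝ) ^ j)⁻¹) ^ η' * (wt θ a (t * 2 ^ j) * ρ (t * 2 ^ j)) := by ring
          _ ≤ C6 * (((2:ℝ) ^ j)⁻¹) ^ η' * C5 := by gcongr
          _ = _ := by ring
      have e2 : ENNReal.ofReal (ρ t) * ENNReal.ofReal (wt θ a (t * 2 ^ j)) ≤
          ENNReal.ofReal (C6 * C5) * (geo γ j * ENNReal.ofReal ((((2:ℝ) ^ j)⁻¹) ^ η)) := by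
        rw [← ENNReal.ofReal_mul' hwp.le, hγ, ← geo_pos (by norm_num) _ hj',
          ← ENNReal.ofReal_mul (by positivity), ← ENNReal.ofReal_mul (by positivity)]
        exact ENNReal.ofReal_le_ofReal e1
      have e3 : ENNReal.ofReal ((((2:ℝ) ^ j)⁻¹) ^ η) * Kf A₀.N A₁.N (t * 2 ^ j) (f - g) ≤
          C2 * (D + M) := by
        calc _ ≤ ENNReal.ofReal ((((2:ℝ) ^ j)⁻¹) ^ η) * (C2 * (Kf A₀.N A₁.N (t * 2 ^ j) f +
              Kf A₀.N A₁.N (t * 2 ^ j) g)) := by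
              gcongr ENNReal.ofReal _ * ?_
              exact (T _ f g).2.2
          _ = C2 * (ENNReal.ofReal ((((2:ℝ) ^ j)⁻¹) ^ η) * Kf A₀.N A₁.N (t * 2 ^ j) f +
              ENNReal.ofReal ((((2:ℝ) ^ j)⁻¹) ^ η) * Kf A₀.N A₁.N (t * 2 ^ j) g) := by ring
          _ ≤ C2 * (M + 1 * D) := by
              gcongr C2 * (?_ + ?_ * ?_)
              · rw [← ENNReal.ofReal_one]
                apply ENNReal.ofReal_le_ofReal
                exact Real.rpow_le_one (by positivity) (inv_le_one_of_one_le₀ h1j) hη0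
              · exact (Kf_le_left A₀ A₁ _ _).trans le_self_add
          _ = _ := by rw [one_mul, add_comm]
      rw [ds, ← mul_assoc]
      calc _ ≤ ENNReal.ofReal (C6 * C5) * (geo γ j * ENNReal.ofReal ((((2:ℝ) ^ j)⁻¹) ^ η)) *
            Kf A₀.N A₁.N (t * 2 ^ j) (f - g) := by gcongr
        _ = ENNReal.ofReal (C6 * C5) * geo γ j * (ENNReal.ofReal ((((2:ℝ) ^ j)⁻¹) ^ η) *
            Kf A₀.N A₁.N (t * 2 ^ j) (f - g)) := by ring
        _ ≤ ENNReal.ofReal (C6 * C5) * geo γ j * (C2 * (D + M)) := by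
            gcongr ENNReal.ofReal _ * geo _ _ * ?_
        _ = _ := by rw [hK]; ring
  have hd := (HD' t ht _ (Kf_HD A₀.N A₁.N (f - g))).1.1
  rw [normK_eq]
  calc _ ≤ ENNReal.ofReal (ρ t) * (Cd * lq q (ds θ a (fun u => Kf A₀.N A₁.N u (f - g)) t)) := by
        gcongr ENNReal.ofReal _ * ?_
    _ = Cd * lq q (fun j => ENNReal.ofReal (ρ t) *
        ds θ a (fun u => Kf A₀.N A₁.N u (f - g)) t j) := by rw [lq_const hq0]; ring
    _ ≤ Cd * (Ca * (D * C3 + (K * (D + M)) * lq q (geo γ))) := by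
        gcongr Cd * ?_
        refine (lq_mono key).trans ((Add _ _).trans ?_)
        rw [lq_const hq0, lq_const hq0, lq_const hq0]
        gcongr Ca * (D * ?_ + _)
        exact W t ht
    _ ≤ Cd * (Ca * ((D + M) * C3 + (K * (D + M)) * lq q (geo γ))) := by
        gcongr Cd * (Ca * (?_ * C3 + _))
        exact le_self_add
    _ = _ := by ring

theorem cond1_id (A₀ A₁ : QuasiBanach E) : Cond1 A₀ A₁ A₁.N (fun t => t) :=
  ⟨1, by simp, fun t _ h => by rw [one_mul]; exact Kf_le_right A₀ A₁ t h⟩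

theorem cond2_id (A₀ A₁ : QuasiBanach E) (η : ℝ) : Cond2 A₀ A₁ A₁.N (fun t => t) η :=
  ⟨1, by simp, fun t _ f g M _ => by
    rw [one_mul]
    exact le_add_self.trans le_self_add⟩

theorem cond1_wt (A₀ A₁ : QuasiBanach E) {a : ℝ → ℝ} {q : ℝ≥0∞} (hq0 : 0 < q) (ha : SVr a)
    (θ : ℝ) : Cond1 A₀ A₁ (normK A₀.N A₁.N θ q a) (fun t => 1 / wt θ a t) := by
  obtain ⟨Cd, hCd, HD'⟩ := disc hq0 ha θ
  refine ⟨Cd, hCd, fun t ht h => ?_⟩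
  have hd := (HD' t ht _ (Kf_HD A₀.N A₁.N h)).2.1
  have h0 := (le_lq hq0 _ (0:ℤ)).trans hd
  rw [← normK_eq, ds] at h0
  simp only [zpow_zero, mul_one] at h0
  have hw := ha.wt_pos θ ht
  calc Kf A₀.N A₁.N t h = ENNReal.ofReal (1 / wt θ a t) * (ENNReal.ofReal (wt θ a t) *
        Kf A₀.N A₁.N t h) := by
        rw [← mul_assoc, ← ENNReal.ofReal_mul (by positivity), one_div_mul_cancel hw.ne']
        simp
    _ ≤ ENNReal.ofReal (1 / wt θ a t) * (Cd * normK A₀.N A₁.N θ q a h) := by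
        gcongr ENNReal.ofReal _ * ?_
    _ = _ := by ring

theorem cond2_wt (A₀ A₁ : QuasiBanach E) {a : ℝ → ℝ} {q : ℝ≥0∞} (hq0 : 0 < q) (ha : SVr a)
    {θ η : ℝ} (hη0 : 0 ≤ η) (hη : η < θ) (hθ : θ < 1) :
    Cond2 A₀ A₁ (normK A₀.N A₁.N θ q a) (fun t => 1 / wt θ a t) η := by
  have up : UpR (fun t => 1 / wt θ a t) ((η + θ) / 2) := by
    obtain ⟨C, hC, H⟩ := (SVr.one.div ha).upR (β := θ) (δ := (η + θ) / 2) (by linarith)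
    have e : ∀ t : ℝ, 0 < t → 1 / wt θ a t = t ^ θ * (1 / a t) := by
      intro t ht
      rw [wt, Real.rpow_neg ht.le]; field_simp
    refine ⟨C, hC, fun s t hs hst => ?_⟩
    beta_reduce
    rw [e s hs, e t (hs.trans_le hst)]
    exact H s t hs hst
  refine cond2_of A₀ A₁ hq0 ha hη0 (η' := (η + θ) / 2) (by linarith) up
    ⟨1, one_pos, fun t ht => ?_⟩ ?_
  · rw [mul_one_div_cancel (ha.wt_pos θ ht).ne']
  · obtain ⟨C, hC, H⟩ := ha.upR (β := 1 - θ) (δ := (1 - θ) / 2) (by linarith)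
    have hG := lq_geo hq0 (gam_pos (lam := 2) (by norm_num) ((1 - θ) / 2))
      (gam_lt (lam := 2) (by norm_num) (δ := (1 - θ) / 2) (by linarith))
    refine ⟨ENNReal.ofReal C * lq q (geo (2 ^ (-((1 - θ) / 2)))), by finiteness, fun t ht => ?_⟩
    rw [← lq_const hq0, ← lq_const hq0]
    refine lq_mono fun j => ?_
    unfold neg1
    split_ifs with hj
    · have hw := ha.wt_pos θ ht
      have h2j : (0:ℝ) < 2 ^ j := by positivity
      have h1 := H (t * 2 ^ j) t (by positivity)
        (mul_le_of_le_one_right ht.le (zpow_le_one_of_nonpos₀ (by norm_num) hj.le))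
      have hdiv : t * 2 ^ j / t = 2 ^ j := by field_simp
      have e : ∀ u : ℝ, 0 < u → u ^ (1 - θ) * a u = u * wt θ a u := by
        intro u hu
        rw [wt, Real.rpow_sub hu, Real.rpow_neg hu.le, Real.rpow_one]; field_simp
      simp only [] at h1
      rw [hdiv, e _ (by positivity), e _ ht] at h1
      beta_reduce
      rw [← geo_neg (by norm_num) _ hj.le, ← ENNReal.ofReal_mul' h2j.le,
        ← ENNReal.ofReal_mul (by positivity), ← ENNReal.ofReal_mul hC.le]
      apply ENNReal.ofReal_le_ofReal
      rw [one_div_mul_eq_div, div_le_iff₀ hw]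
      refine le_of_mul_le_mul_left ?_ ht
      calc _ = t * 2 ^ j * wt θ a (t * 2 ^ j) := by ring
        _ ≤ _ := h1
        _ = _ := by ring
    · simp

/-- the partial quasi-norm of the slowly varying weight -/
def BL (q : ℝ≥0∞) (a : ℝ → ℝ) (t : ℝ) : ℝ≥0∞ := LqNorm q (Ioo 0 t) (svWgt q a)

/-- its discretization -/
def bsq (a : ℝ → ℝ) (t : ℝ) : ℤ → ℝ≥0∞ := neg1 (fun j => ENNReal.ofReal (a (t * 2 ^ j)))

theorem BL_disc {q : ℝ≥0∞} (hq0 : 0 < q) {a : ℝ → ℝ} (ha : SVr a) : ∃ C : ℝ≥0∞, C ≠ ∞ ∧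
    ∀ t, 0 < t → BL q a t ≤ C * lq q (bsq a t) ∧ lq q (bsq a t) ≤ C * BL q a t := by
  obtain ⟨C, hC, H⟩ := disc hq0 ha 0
  refine ⟨C, hC, fun t ht => ?_⟩
  have h := H t ht (fun _ => 1) (fun u v _ _ _ => by simp)
  have e1 : Fw q 0 a (fun _ => 1) = svWgt q a := by
    funext u; simp [Fw, svWgt]
  have e2 : ds 0 a (fun _ => 1) t = fun j => ENNReal.ofReal (a (t * 2 ^ j)) := by
    funext j; simp [ds, wt_zero]
  rw [e1, e2] at h
  exact ⟨h.1.2, h.2.2⟩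

theorem BL_mono (q : ℝ≥0∞) (a : ℝ → ℝ) {s t : ℝ} (h : s ≤ t) : BL q a s ≤ BL q a t := by
  have hs : Ioo 0 s ⊆ Ioo 0 t := Ioo_subset_Ioo_right h
  unfold BL LqNorm
  split_ifs
  · exact essSup_mono_measure (Measure.restrict_mono hs le_rfl).absolutelyContinuous
  · exact ENNReal.rpow_le_rpow (lintegral_mono_set hs) (by positivity)

theorem BL_scale {q : ℝ≥0∞} (hq0 : 0 < q) {a : ℝ → ℝ} (ha : SVr a) {ε : ℝ} (hε : 0 < ε) :
    ∃ C : ℝ≥0∞, C ≠ ∞ ∧ ∀ s t, 0 < s → s ≤ t →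
      BL q a t ≤ C * ENNReal.ofReal ((s / t) ^ (-ε)) * BL q a s := by
  obtain ⟨C, hC, H⟩ := BL_disc hq0 ha
  obtain ⟨K, hK, S⟩ := ha.2 ε hε
  refine ⟨C * ENNReal.ofReal K * C, by finiteness, fun s t hs hst => ?_⟩
  have ht : 0 < t := hs.trans_le hst
  have h1 : lq q (bsq a t) ≤
      ENNReal.ofReal K * ENNReal.ofReal ((s / t) ^ (-ε)) * lq q (bsq a s) := by
    rw [← lq_const hq0]
    refine lq_mono fun j => ?_
    unfold bsq neg1
    split_ifs
    · have h2 := (S (s * 2 ^ j) (t * 2 ^ j) (by positivity) (by gcongr)).1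
      rw [mul_div_mul_right _ _ (by positivity)] at h2
      rw [← ENNReal.ofReal_mul hK.le, ← ENNReal.ofReal_mul (by positivity)]
      exact ENNReal.ofReal_le_ofReal h2
    · simp
  calc BL q a t ≤ C * lq q (bsq a t) := (H t ht).1
    _ ≤ C * (ENNReal.ofReal K * ENNReal.ofReal ((s / t) ^ (-ε)) * (C * BL q a s)) := by
        gcongr C * ?_
        refine h1.trans ?_
        gcongr ENNReal.ofReal _ * ENNReal.ofReal _ * ?_
        exact (H s hs).2
    _ = _ := by ring

theorem BL_ne_top {q : ℝ≥0∞} (hq0 : 0 < q) {a : ℝ → ℝ} (ha : SVr a) (h1 : BL q a 1 ≠ ∞) (t : ℝ) :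
    BL q a t ≠ ∞ := by
  rcases le_total t 1 with h | h
  · exact ne_top_of_le_ne_top h1 (BL_mono q a h)
  · obtain ⟨C, hC, H⟩ := BL_scale hq0 ha (ε := 1) one_pos
    refine ne_top_of_le_ne_top ?_ (H 1 t one_pos h)
    finiteness

/-- the weight is controlled by its partial quasi-norm -/
theorem BL_lower {q : ℝ≥0∞} (hq0 : 0 < q) {a : ℝ → ℝ} (ha : SVr a) : ∃ C : ℝ≥0∞, C ≠ ∞ ∧
    ∀ t, 0 < t → ENNReal.ofReal (a t) ≤ C * BL q a t := by
  obtain ⟨C, hC, H⟩ := BL_disc hq0 ha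
  obtain ⟨W, hW, S⟩ := ha.wt_comp 0 2 (by norm_num)
  refine ⟨ENNReal.ofReal W * C, by finiteness, fun t ht => ?_⟩
  have h1 := (S (t / 2) t (by positivity) (by linarith) (by linarith)).1
  rw [wt_zero, wt_zero] at h1
  have h2 := le_lq hq0 (bsq a t) (-1)
  have e : bsq a t (-1) = ENNReal.ofReal (a (t / 2)) := by
    simp [bsq, neg1, div_eq_mul_inv]
  rw [e] at h2
  calc ENNReal.ofReal (a t) ≤ ENNReal.ofReal W * ENNReal.ofReal (a (t / 2)) := by
        rw [← ENNReal.ofReal_mul hW.le]; exact ENNReal.ofReal_le_ofReal h1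
    _ ≤ ENNReal.ofReal W * (C * BL q a t) := by
        gcongr ENNReal.ofReal _ * ?_
        exact h2.trans (H t ht).2
    _ = _ := by ring

theorem BL_ne_zero {q : ℝ≥0∞} (hq0 : 0 < q) {a : ℝ → ℝ} (ha : SVr a) {t : ℝ} (ht : 0 < t) :
    BL q a t ≠ 0 := by
  obtain ⟨C, hC, H⟩ := BL_lower hq0 ha
  intro h
  have := H t ht
  rw [h, mul_zero] at this
  have h2 := ha.1 t ht
  simp at this
  linarith

theorem BL_svr {q : ℝ≥0∞} (hq0 : 0 < q) {a : ℝ → ℝ} (ha : SVr a) (h1 : BL q a 1 ≠ ∞) :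
    SVr (fun t => (BL q a t).toReal) := by
  have hpos : ∀ t, 0 < t → 0 < (BL q a t).toReal := fun t ht =>
    ENNReal.toReal_pos (BL_ne_zero hq0 ha ht) (BL_ne_top hq0 ha h1 t)
  refine ⟨hpos, fun ε hε => ?_⟩
  obtain ⟨C, hC, H⟩ := BL_scale hq0 ha hε
  refine ⟨C.toReal + 1, by positivity, fun s t hs hst => ?_⟩
  have ht : 0 < t := hs.trans_le hst
  have hp : 0 < (s / t) ^ (-ε) := by positivity
  have hg : 1 ≤ (s / t) ^ (-ε) :=
    Real.one_le_rpow_of_pos_of_le_one_of_nonpos (by positivity) ((div_le_one ht).2 hst)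
      (by linarith)
  have bs := hpos s hs
  have bt := hpos t ht
  constructor
  · have h2 := ENNReal.toReal_mono
      (by have := BL_ne_top hq0 ha h1 s; finiteness) (H s t hs hst)
    rw [ENNReal.toReal_mul, ENNReal.toReal_mul, ENNReal.toReal_ofReal hp.le] at h2
    refine h2.trans ?_
    gcongr
    linarith
  · have h2 := ENNReal.toReal_mono (BL_ne_top hq0 ha h1 t) (BL_mono q a hst)
    calc (BL q a s).toReal ≤ 1 * 1 * (BL q a t).toReal := by linarith
      _ ≤ _ := by
        gcongr
        linarith [ENNReal.toReal_nonneg (a := C)]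

theorem ofReal_div_BL {q : ℝ≥0∞} (hq0 : 0 < q) {a : ℝ → ℝ} (ha : SVr a) (h1 : BL q a 1 ≠ ∞)
    {t : ℝ} (ht : 0 < t) :
    ENNReal.ofReal (t / (BL q a t).toReal) * (ENNReal.ofReal t⁻¹ * BL q a t) = 1 := by
  have hp := ENNReal.toReal_pos (BL_ne_zero hq0 ha ht) (BL_ne_top hq0 ha h1 t)
  nth_rewrite 2 [← ENNReal.ofReal_toReal (BL_ne_top hq0 ha h1 t)]
  rw [← ENNReal.ofReal_mul (by positivity), ← ENNReal.ofReal_mul (by positivity)]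
  rw [← ENNReal.ofReal_one]
  congr 1
  field_simp

theorem cond1_BL (A₀ A₁ : QuasiBanach E) {a : ℝ → ℝ} {q : ℝ≥0∞} (hq0 : 0 < q) (ha : SVr a)
    (h1 : BL q a 1 ≠ ∞) :
    Cond1 A₀ A₁ (normK A₀.N A₁.N 1 q a) (fun t => t / (BL q a t).toReal) := by
  obtain ⟨Cd, hCd, HD'⟩ := disc hq0 ha 1
  obtain ⟨C, hC, H⟩ := BL_disc hq0 ha
  refine ⟨C * Cd, by finiteness, fun t ht h => ?_⟩
  have hd := (HD' t ht _ (Kf_HD A₀.N A₁.N h)).2.1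
  rw [← normK_eq] at hd
  have key : (ENNReal.ofReal t⁻¹ * Kf A₀.N A₁.N t h) * lq q (bsq a t) ≤
      lq q (ds 1 a (fun u => Kf A₀.N A₁.N u h) t) := by
    rw [← lq_const hq0]
    refine lq_mono fun j => ?_
    unfold bsq neg1
    split_ifs with hj
    · have h2j : (0:ℝ) < 2 ^ j := by positivity
      have hK := Kf_scale A₀.N A₁.N h (s := t * 2 ^ j) (t := t) (by positivity)
        (mul_le_of_le_one_right ht.le (zpow_le_one_of_nonpos₀ (by norm_num) hj.le))
      have hap := ha.1 (t * 2 ^ j) (by positivity)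
      have e : ENNReal.ofReal (wt 1 a (t * 2 ^ j)) =
          ENNReal.ofReal t⁻¹ * ENNReal.ofReal (t / (t * 2 ^ j)) *
            ENNReal.ofReal (a (t * 2 ^ j)) := by
        rw [← ENNReal.ofReal_mul (by positivity), ← ENNReal.ofReal_mul (by positivity), wt,
          Real.rpow_neg_one]
        congr 2
        field_simp
      rw [ds, e]
      calc _ ≤ ENNReal.ofReal t⁻¹ * (ENNReal.ofReal (t / (t * 2 ^ j)) *
              Kf A₀.N A₁.N (t * 2 ^ j) h) * ENNReal.ofReal (a (t * 2 ^ j)) := by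
            gcongr ENNReal.ofReal _ * ?_ * ENNReal.ofReal _
        _ = _ := by ring
    · simp
  calc Kf A₀.N A₁.N t h
      = ENNReal.ofReal (t / (BL q a t).toReal) * (ENNReal.ofReal t⁻¹ * BL q a t) *
        Kf A₀.N A₁.N t h := by rw [ofReal_div_BL hq0 ha h1 ht, one_mul]
    _ ≤ ENNReal.ofReal (t / (BL q a t).toReal) * (ENNReal.ofReal t⁻¹ * (C * lq q (bsq a t))) *
        Kf A₀.N A₁.N t h := by
        gcongr ENNReal.ofReal _ * (ENNReal.ofReal _ * ?_) * Kf _ _ _ _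
        exact (H t ht).1
    _ = C * (ENNReal.ofReal (t / (BL q a t).toReal) *
        ((ENNReal.ofReal t⁻¹ * Kf A₀.N A₁.N t h) * lq q (bsq a t))) := by ring
    _ ≤ C * (ENNReal.ofReal (t / (BL q a t).toReal) * (Cd * normK A₀.N A₁.N 1 q a h)) := by
        gcongr C * (ENNReal.ofReal _ * ?_)
        exact key.trans hd
    _ = _ := by ring

theorem cond2_BL (A₀ A₁ : QuasiBanach E) {a : ℝ → ℝ} {q : ℝ≥0∞} (hq0 : 0 < q) (ha : SVr a)
    (h1 : BL q a 1 ≠ ∞) {η : ℝ} (hη0 : 0 ≤ η) (hη : η < 1) :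
    Cond2 A₀ A₁ (normK A₀.N A₁.N 1 q a) (fun t => t / (BL q a t).toReal) η := by
  have hpos : ∀ t, 0 < t → 0 < (BL q a t).toReal := fun t ht =>
    ENNReal.toReal_pos (BL_ne_zero hq0 ha ht) (BL_ne_top hq0 ha h1 t)
  have up : UpR (fun t => t / (BL q a t).toReal) ((η + 1) / 2) := by
    have h := (SVr.one.div (BL_svr hq0 ha h1)).upR (β := 1) (δ := (η + 1) / 2) (by linarith)
    simpa only [Real.rpow_one, mul_one_div] using h
  refine cond2_of A₀ A₁ hq0 ha hη0 (η' := (η + 1) / 2) (by linarith) up ?_ ?_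
  · obtain ⟨C, hC, H⟩ := BL_lower hq0 ha
    refine ⟨C.toReal + 1, by positivity, fun t ht => ?_⟩
    have h2 := ENNReal.toReal_mono (by have := BL_ne_top hq0 ha h1 t; finiteness) (H t ht)
    rw [ENNReal.toReal_ofReal (ha.1 t ht).le, ENNReal.toReal_mul] at h2
    have hb := hpos t ht
    have e : wt 1 a t * (t / (BL q a t).toReal) = a t / (BL q a t).toReal := by
      rw [wt, Real.rpow_neg_one]; field_simp
    rw [e, div_le_iff₀ hb]
    nlinarith
  · obtain ⟨C, hC, H⟩ := BL_disc hq0 ha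
    refine ⟨C, hC, fun t ht => ?_⟩
    have e : neg1 (fun j => ENNReal.ofReal (wt 1 a (t * 2 ^ j)) * ENNReal.ofReal (2 ^ j)) =
        fun j => ENNReal.ofReal t⁻¹ * bsq a t j := by
      funext j
      unfold bsq neg1
      split_ifs
      · have h2j : (0:ℝ) < 2 ^ j := by positivity
        beta_reduce
        rw [← ENNReal.ofReal_mul' h2j.le, ← ENNReal.ofReal_mul (by positivity), wt,
          Real.rpow_neg_one]
        congr 1
        field_simp
      · simp
    rw [e, lq_const hq0]
    calc _ ≤ ENNReal.ofReal (t / (BL q a t).toReal) * (ENNReal.ofReal t⁻¹ * (C * BL q a t)) := by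
          gcongr ENNReal.ofReal _ * (ENNReal.ofReal _ * ?_)
          exact (H t ht).2
      _ = C * (ENNReal.ofReal (t / (BL q a t).toReal) * (ENNReal.ofReal t⁻¹ * BL q a t)) := by
          ring
      _ = C := by rw [ofReal_div_BL hq0 ha h1 ht, mul_one]
      _ ≤ C := le_rfl

theorem theorem10
    (A₀ A₁ : QuasiBanach E)
    (hne : ∃ x : E, x ≠ 0 ∧ A₀.N x ≠ ∞ ∧ A₁.N x ≠ ∞)
    (θ₀ θ₁ : ℝ) (hθ₀ : 0 < θ₀) (hθ₀₁ : θ₀ < θ₁) (hθ₁ : θ₁ < 1)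
    (r₀ q₀ q₁ : ℝ≥0∞) (hr₀ : 0 < r₀) (hq₀ : 0 < q₀) (hq₁ : 0 < q₁)
    (a₀ a₁ b₀ : ℝ → ℝ)
    (h_sv_a₀ : SlowlyVarying a₀)
    (h_sv_a₁ : SlowlyVarying a₁)
    (h_sv_b₀ : SlowlyVarying b₀)
    (hfin : LqNorm r₀ (Ioi 1) (svWgt r₀ (fun s => b₀ s / a₀ s)) ≠ ∞) :
    (∀ σ σinv : ℝ → ℝ,
        StrictMonoOn σ (Ioi 0) →
        (∀ t ∈ Ioi (0:ℝ), DifferentiableAt ℝ σ t) →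
        (∀ t ∈ Ioi (0:ℝ), σ t ∈ Ioi (0:ℝ) ∧ σinv (σ t) = t) →
        (∀ t ∈ Ioi (0:ℝ), σinv t ∈ Ioi (0:ℝ) ∧ σ (σinv t) = t) →
        EquivOn (Ioi 0) σ (fun t => t ^ (1 - θ₀) * a₀ t) →
        EquivNorms
          (normK (normK A₀.N A₁.N θ₀ q₀ a₀) A₁.N 0 r₀ (fun t => b₀ (σinv t) / a₀ (σinv t)))
          (normL A₀.N A₁.N θ₀ r₀ q₀ b₀ a₀)) ∧
    (LqNorm q₁ (Ioo 0 1) (svWgt q₁ (fun s => a₁ s)) ≠ ∞ →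
      ∀ σ σinv : ℝ → ℝ,
        StrictMonoOn σ (Ioi 0) →
        (∀ t ∈ Ioi (0:ℝ), DifferentiableAt ℝ σ t) →
        (∀ t ∈ Ioi (0:ℝ), σ t ∈ Ioi (0:ℝ) ∧ σinv (σ t) = t) →
        (∀ t ∈ Ioi (0:ℝ), σinv t ∈ Ioi (0:ℝ) ∧ σ (σinv t) = t) →
        EquivOn (Ioi 0) σ
          (fun t => t ^ (1 - θ₀) * a₀ t / (LqNorm q₁ (Ioo 0 t) (svWgt q₁ (fun s => a₁ s))).toReal) →
        EquivNorms
          (normK (normK A₀.N A₁.N θ₀ q₀ a₀) (normK A₀.N A₁.N 1 q₁ a₁) 0 r₀ (fun t => b₀ (σinv t) / a₀ (σinv t)))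
          (normL A₀.N A₁.N θ₀ r₀ q₀ b₀ a₀)) ∧
    (∀ σ σinv : ℝ → ℝ,
        StrictMonoOn σ (Ioi 0) →
        (∀ t ∈ Ioi (0:ℝ), DifferentiableAt ℝ σ t) →
        (∀ t ∈ Ioi (0:ℝ), σ t ∈ Ioi (0:ℝ) ∧ σinv (σ t) = t) →
        (∀ t ∈ Ioi (0:ℝ), σinv t ∈ Ioi (0:ℝ) ∧ σ (σinv t) = t) →
        EquivOn (Ioi 0) σ (fun t => t ^ (θ₁ - θ₀) * (a₀ t / a₁ t)) →
        EquivNorms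
          (normK (normK A₀.N A₁.N θ₀ q₀ a₀) (normK A₀.N A₁.N θ₁ q₁ a₁) 0 r₀ (fun t => b₀ (σinv t) / a₀ (σinv t)))
          (normL A₀.N A₁.N θ₀ r₀ q₀ b₀ a₀)) := by
  have sa₀ := h_sv_a₀.svr
  have sa₁ := h_sv_a₁.svr
  have sb₀ := h_sv_b₀.svr
  have hθ₀1 : θ₀ < 1 := hθ₀₁.trans hθ₁
  refine ⟨fun σ σinv hm _ hi1 hi2 hσ => ?_, fun hB σ σinv hm _ hi1 hi2 hσ => ?_,
    fun σ σinv hm _ hi1 hi2 hσ => ?_⟩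
  · refine core A₀ A₁ A₁.N (ρ := fun t => t) hq₀ hr₀ sa₀ sb₀ sa₀ hθ₀ hθ₀1 hθ₀1
      (cond1_id A₀ A₁) (cond2_id A₀ A₁ 1) (α := 1 - θ₀) (by linarith) (fun t ht => ?_)
      hm hi1 hi2 hσ
    rw [wt, Real.rpow_sub ht, Real.rpow_neg ht.le, Real.rpow_one]; field_simp
  · have hB' : BL q₁ a₁ 1 ≠ ∞ := hB
    refine core A₀ A₁ _ (ρ := fun t => t / (BL q₁ a₁ t).toReal)
      (ℓ := fun t => a₀ t / (BL q₁ a₁ t).toReal) hq₀ hr₀ sa₀ sb₀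
      (sa₀.div (BL_svr hq₁ sa₁ hB')) hθ₀ hθ₀1 hθ₀₁
      (cond1_BL A₀ A₁ hq₁ sa₁ hB') (cond2_BL A₀ A₁ hq₁ sa₁ hB' (hθ₀.trans hθ₀₁).le hθ₁)
      (α := 1 - θ₀) (by linarith) (fun t ht => ?_) hm hi1 hi2 ?_
    · rw [wt, Real.rpow_sub ht, Real.rpow_neg ht.le, Real.rpow_one]; field_simp
    · simp only [mul_div_assoc] at hσ
      exact hσ
  · refine core A₀ A₁ _ (ρ := fun t => 1 / wt θ₁ a₁ t)
      (ℓ := fun t => a₀ t / a₁ t) hq₀ hr₀ sa₀ sb₀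
      (sa₀.div sa₁) hθ₀ hθ₀1 (η := (θ₀ + θ₁) / 2) (by linarith)
      (cond1_wt A₀ A₁ hq₁ sa₁ θ₁)
      (cond2_wt A₀ A₁ hq₁ sa₁ (by linarith) (by linarith) hθ₁)
      (α := θ₁ - θ₀) (by linarith) (fun t ht => ?_) hm hi1 hi2 hσ
    have h1 := sa₁.1 t ht
    rw [wt, wt, Real.rpow_sub ht, Real.rpow_neg ht.le, Real.rpow_neg ht.le]; field_simp

end
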